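/- arXiv:2006.07138 — 3 statements merged into one kernel-verified Lean document; each statement's English description precedes it below -/
import Mathlib

section
/- Let n ≥ 1, 0 < s < s₀ < 1 and ρ₀ ∈ (0, √(4/5)). There exists a constant C = C(n, s, s₀, ρ₀) > 0 with the following property. Let t ∈ (s, s₀], let M ≥ 1, let 𝒩 ⊆ ℝ^M be any set, and let u : 𝕊ⁿ → 𝒩 be a continuous map with E_{t,n/s}(u) < ∞ which minimizes the E_{t,n/s}-energy in its homotopy class, i.e. E_{t,n/s}(u) ≤ E_{t,n/s}(v) for every continuous v : 𝕊ⁿ → 𝒩 homotopic to u through maps into 𝒩. Then for every y₀ ∈ 𝕊ⁿ and every ρ ∈ (0, ρ₀]: ∫_{D(y₀,ρ)} ∫_{𝕊ⁿ} |u(x)−u(y)|^{n/s}/|x−y|^{n+t·n/s} dμ(x) dμ(y) ≤ C · ρ^{−n(t/s−1)} · ∫_{𝕊ⁿ∖D(y₀,ρ)} ∫_{𝕊ⁿ} |u(x)−u(y)|^{n/s}/|x−y|^{n+t·n/s} dμ(x) dμ(y), where D(y₀,ρ) := {x ∈ 𝕊ⁿ : |x−y₀| < ρ} and both sides are interpreted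 in [0,∞]. -/
open MeasureTheory
open scoped ENNReal

noncomputable section

/-- The unit sphere `𝕊ⁿ ⊆ ℝ^{n+1}`. -/
abbrev Sph (n : ℕ) : Type _ := ↥(Metric.sphere (0 : EuclideanSpace ℝ (Fin (n + 1))) 1)

/-- The `n`-dimensional Hausdorff measure on `𝕊ⁿ`. -/
def sphMeasure (n : ℕ) : Measure (Sph n) := μH[(n : ℝ)]

/-- The kernel `|u(x)-u(y)|^q / |x-y|^e` of the fractional energies, as a value in `[0,∞]`. -/
def sphKer (n M : ℕ) (q e : ℝ) (u : Sph n → EuclideanSpace ℝ (Fin M))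
    (x y : Sph n) : ℝ≥0∞ :=
  ENNReal.ofReal (‖u x - u y‖ ^ q / dist x y ^ e)

/-- The fractional energy `E_{t,p}(u) = ∫∫ |u(x)-u(y)|^p / |x-y|^{n+tp} dμ dμ`. -/
def sphEnergy (n M : ℕ) (t p : ℝ) (u : Sph n → EuclideanSpace ℝ (Fin M)) : ℝ≥0∞ :=
  ∫⁻ x, ∫⁻ y, sphKer n M p ((n : ℝ) + t * p) u x y ∂(sphMeasure n) ∂(sphMeasure n)

/-- `f` and `g` are homotopic as maps from `X` into the subset `N` of `E`. -/
def HomotopicIn {X E : Type*} [TopologicalSpace X] [TopologicalSpace E] (N : Set E)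
    (f g : X → E) : Prop :=
  ∃ H : unitInterval × X → E, Continuous H ∧ (∀ p, H p ∈ N) ∧
    (∀ x, H (0, x) = f x) ∧ (∀ x, H (1, x) = g x)

/-!
Compare `u` with `u ∘ σ⁻¹`, where `σ` is the Möbius dilation of the sphere repelling from `y₀` by
the factor `2 / ρ`; it is isotopic to the identity, so `u ∘ σ⁻¹` is an admissible competitor. The
conformal factor `l` of `σ` is at least `1 / ρ` on the ball `D` of radius `ρ` around `y₀` and at
least `ρ / 2` everywhere. Since `|σ x - σ y|² = l x * l y * |x - y|²` and `σ` has Jacobian `lⁿ`,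
changing variables in the energy of `u ∘ σ⁻¹` multiplies the energy density of `u` at `(x, y)` by
`(l x * l y) ^ (-b / 2)` with `b = n * (t / s - 1)`. This weight is at most `ρ ^ b < 1` on `D × D`
and at most `(ρ / 2) ^ (-b)` elsewhere, so minimality lets the energy on `D × D` be absorbed into
the energy off `D × D`, at the price of the factor `((ρ / 2) ^ (-b) - 1) / (1 - ρ ^ b)`. With
`A = ρ ^ (-b)` the numerator is `2 ^ b * (A - 1) + (2 ^ b - 1)`, where `2 ^ b - 1` is at most a
multiple of `b`, and `b` at most a multiple of `A - 1`; hence the factor is at most a constant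
times `A`, uniformly as `t ↓ s`.
-/

open Set Filter Metric Function
open scoped Topology RealInnerProductSpace

section Absorption

variable {X : Type*} [MeasurableSpace X]

theorem le_ofReal_div_mul_of_add_le {P Q : ℝ≥0∞} (hP : P ≠ ∞) (hQ : Q ≠ ∞) {θ Θ : ℝ}
    (hθ₀ : 0 ≤ θ) (hθ : θ < 1) (hΘ : 0 ≤ Θ)
    (h : P + Q ≤ ENNReal.ofReal θ * P + ENNReal.ofReal Θ * Q) :
    P ≤ ENNReal.ofReal ((Θ - 1) / (1 - θ)) * Q := by
  lift P to NNReal using hP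
  lift Q to NNReal using hQ
  simp only [← ENNReal.ofReal_coe_nnreal] at h ⊢
  rw [← ENNReal.ofReal_add (by positivity) (by positivity), ← ENNReal.ofReal_mul hθ₀,
    ← ENNReal.ofReal_mul hΘ, ← ENNReal.ofReal_add (by positivity) (by positivity),
    ENNReal.ofReal_le_ofReal_iff (by positivity)] at h
  rw [← ENNReal.ofReal_mul' Q.coe_nonneg]
  apply ENNReal.ofReal_le_ofReal
  rw [div_mul_eq_mul_div, le_div_iff₀ (by linarith)]
  linarith

theorem setLIntegral_le_of_lintegral_le_lintegral_mul {ν : Measure X} {f w : X → ℝ≥0∞}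
    {S : Set X} (hS : MeasurableSet S) {θ Θ : ℝ} (hθ₀ : 0 ≤ θ) (hθ : θ < 1) (hΘ : 0 ≤ Θ)
    (hfin : ∫⁻ a, f a ∂ν ≠ ∞) (hle : ∫⁻ a, f a ∂ν ≤ ∫⁻ a, f a * w a ∂ν)
    (hwS : ∀ a ∈ S, w a ≤ ENNReal.ofReal θ) (hw : ∀ a, w a ≤ ENNReal.ofReal Θ) :
    ∫⁻ a in S, f a ∂ν ≤ ENNReal.ofReal ((Θ - 1) / (1 - θ)) * ∫⁻ a in Sᶜ, f a ∂ν := by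
  refine le_ofReal_div_mul_of_add_le (ne_top_of_le_ne_top hfin (setLIntegral_le_lintegral ..))
    (ne_top_of_le_ne_top hfin (setLIntegral_le_lintegral ..)) hθ₀ hθ hΘ ?_
  calc ∫⁻ a in S, f a ∂ν + ∫⁻ a in Sᶜ, f a ∂ν = ∫⁻ a, f a ∂ν := lintegral_add_compl f hS
    _ ≤ ∫⁻ a, f a * w a ∂ν := hle
    _ = ∫⁻ a in S, f a * w a ∂ν + ∫⁻ a in Sᶜ, f a * w a ∂ν := (lintegral_add_compl _ hS).symm
    _ ≤ ∫⁻ a in S, ENNReal.ofReal θ * f a ∂ν + ∫⁻ a in Sᶜ, ENNReal.ofReal Θ * f a ∂ν := by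
      gcongr ?_ + ?_
      · exact setLIntegral_mono' hS fun a ha => (mul_comm _ _).trans_le (by gcongr; exact hwS a ha)
      · exact lintegral_mono fun a => (mul_comm _ _).trans_le (by gcongr; exact hw a)
    _ = _ := by
      rw [lintegral_const_mul' _ _ ENNReal.ofReal_ne_top,
        lintegral_const_mul' _ _ ENNReal.ofReal_ne_top]

theorem setLIntegral_lintegral_le_of_prod_self {μ : Measure X} [SFinite μ] {K : X → X → ℝ≥0∞}
    (hK : AEMeasurable (uncurry K) (μ.prod μ)) (hsymm : ∀ x y, K x y = K y x) {D : Set X}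
    {c : ℝ≥0∞} (h : ∫⁻ z in D ×ˢ D, uncurry K z ∂μ.prod μ ≤
      c * ∫⁻ z in (D ×ˢ D)ᶜ, uncurry K z ∂μ.prod μ) :
    ∫⁻ y in D, ∫⁻ x, K x y ∂μ ∂μ ≤ (2 * c + 1) * ∫⁻ y in Dᶜ, ∫⁻ x, K x y ∂μ ∂μ := by
  have hright : ∀ A : Set X, ∫⁻ y in A, ∫⁻ x, K x y ∂μ ∂μ =
      ∫⁻ z in univ ×ˢ A, uncurry K z ∂μ.prod μ := fun A => by
    simpa using (setLIntegral_prod_symm (s := univ) (t := A) (uncurry K) hK.restrict).symm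
  have hleft : ∀ A : Set X, ∫⁻ y in A, ∫⁻ x, K x y ∂μ ∂μ =
      ∫⁻ z in A ×ˢ univ, uncurry K z ∂μ.prod μ := fun A => by
    simpa [hsymm] using (setLIntegral_prod (s := A) (t := univ) (uncurry K) hK.restrict).symm
  set Z := ∫⁻ y in Dᶜ, ∫⁻ x, K x y ∂μ ∂μ
  have hcompl : ∫⁻ z in (D ×ˢ D)ᶜ, uncurry K z ∂μ.prod μ ≤ 2 * Z := by
    calc ∫⁻ z in (D ×ˢ D)ᶜ, uncurry K z ∂μ.prod μ
        = ∫⁻ z in Dᶜ ×ˢ univ ∪ univ ×ˢ Dᶜ, uncurry K z ∂μ.prod μ := by rw [compl_prod_eq_union]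
      _ ≤ Z + Z := by grw [lintegral_union_le, ← hleft, ← hright]
      _ = 2 * Z := (two_mul Z).symm
  calc ∫⁻ y in D, ∫⁻ x, K x y ∂μ ∂μ
      = ∫⁻ z in univ ×ˢ D, uncurry K z ∂μ.prod μ := hright D
    _ ≤ ∫⁻ z in D ×ˢ D ∪ Dᶜ ×ˢ univ, uncurry K z ∂μ.prod μ := by
      refine lintegral_mono_set fun z hz => ?_
      by_cases hz₁ : z.1 ∈ D
      · exact .inl ⟨hz₁, hz.2⟩
      · exact .inr ⟨hz₁, trivial⟩
    _ ≤ c * (2 * Z) + Z := by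
      grw [lintegral_union_le, h, hcompl, ← hleft]
    _ = (2 * c + 1) * Z := by ring

theorem setLIntegral_lintegral_le_of_lintegral_le_mul {μ : Measure X} [SFinite μ]
    {K W : X → X → ℝ≥0∞} (hK : Measurable (uncurry K)) (hW : Measurable (uncurry W))
    (hsymm : ∀ x y, K x y = K y x) {D : Set X} (hD : MeasurableSet D) {θ Θ : ℝ}
    (hθ₀ : 0 ≤ θ) (hθ : θ < 1) (hΘ : 0 ≤ Θ) (hfin : ∫⁻ x, ∫⁻ y, K x y ∂μ ∂μ ≠ ∞)
    (hle : ∫⁻ x, ∫⁻ y, K x y ∂μ ∂μ ≤ ∫⁻ x, ∫⁻ y, K x y * W x y ∂μ ∂μ)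
    (hWD : ∀ x ∈ D, ∀ y ∈ D, W x y ≤ ENNReal.ofReal θ)
    (hWΘ : ∀ x y, W x y ≤ ENNReal.ofReal Θ) :
    ∫⁻ y in D, ∫⁻ x, K x y ∂μ ∂μ ≤
      (2 * ENNReal.ofReal ((Θ - 1) / (1 - θ)) + 1) * ∫⁻ y in Dᶜ, ∫⁻ x, K x y ∂μ ∂μ := by
  refine setLIntegral_lintegral_le_of_prod_self hK.aemeasurable hsymm
    (setLIntegral_le_of_lintegral_le_lintegral_mul (w := uncurry W) (hD.prod hD) hθ₀ hθ hΘ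
      ?_ ?_ (fun z hz => hWD _ hz.1 _ hz.2) fun z => hWΘ _ _)
  · rwa [lintegral_prod _ hK.aemeasurable]
  · rw [lintegral_prod _ hK.aemeasurable]
    exact hle.trans_eq (lintegral_prod (uncurry K * uncurry W) (hK.mul hW).aemeasurable).symm

end Absorption

section Mobius

/-- `σ` distorts distances by a positive continuous factor `l`, evenly shared between the two
endpoints. This is the two-point form of a Möbius transformation with conformal factor `l`. -/
structure MobiusWith {X Z : Type*} [PseudoMetricSpace X] [PseudoMetricSpace Z]
    (l : X → ℝ) (σ : X → Z) : Prop where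
  continuous_factor : Continuous l
  factor_pos : ∀ x, 0 < l x
  dist_sq : ∀ x y, dist (σ x) (σ y) ^ 2 = l x * l y * dist x y ^ 2

/-- The kernel `|u(x)-u(y)|^q / |x-y|^e` of a fractional energy of a map between metric spaces. -/
def fracKernel {X Y : Type*} [PseudoMetricSpace X] [PseudoMetricSpace Y] (q e : ℝ) (u : X → Y)
    (x y : X) : ℝ≥0∞ :=
  ENNReal.ofReal (dist (u x) (u y) ^ q / dist x y ^ e)

/-- The fractional energy with exponents `q` and `e` with respect to the `d`-dimensional Hausdorff
measure; the energy `E_{t,p}` in dimension `n` has `d = n`, `q = p` and `e = n + t * p`. -/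
def fracEnergy {X Y : Type*} [MetricSpace X] [MeasurableSpace X] [BorelSpace X]
    [PseudoMetricSpace Y] (d q e : ℝ) (u : X → Y) : ℝ≥0∞ :=
  ∫⁻ x, ∫⁻ y, fracKernel q e u x y ∂μH[d] ∂μH[d]

theorem fracKernel_comm {X Y : Type*} [PseudoMetricSpace X] [PseudoMetricSpace Y] (q e : ℝ)
    (u : X → Y) (x y : X) : fracKernel q e u x y = fracKernel q e u y x := by
  simp only [fracKernel, dist_comm]

theorem measurable_fracKernel {X Y : Type*} [PseudoMetricSpace X] [SecondCountableTopology X]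
    [MeasurableSpace X] [OpensMeasurableSpace X] [PseudoMetricSpace Y] (q e : ℝ) {u : X → Y}
    (hu : Continuous u) : Measurable (uncurry (fracKernel q e u)) := by
  have hnum : Measurable fun z : X × X => dist (u z.1) (u z.2) :=
    (by fun_prop : Continuous _).measurable
  exact ((hnum.pow_const q).div (measurable_dist.pow_const e)).ennreal_ofReal

namespace MobiusWith

section Basic

variable {X Y Z : Type*} [PseudoMetricSpace X] [PseudoMetricSpace Y] [PseudoMetricSpace Z]
  {l : X → ℝ} {σ : X → Z}

theorem dist_eq (hσ : MobiusWith l σ) (x y : X) :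
    dist (σ x) (σ y) = (l x * l y) ^ (1 / 2 : ℝ) * dist x y := by
  have hl : 0 ≤ l x * l y := (mul_pos (hσ.factor_pos x) (hσ.factor_pos y)).le
  rw [← sq_eq_sq₀ dist_nonneg (by positivity), hσ.dist_sq, mul_pow, ← Real.sqrt_eq_rpow,
    Real.sq_sqrt hl]

theorem lipschitzOnWith (hσ : MobiusWith l σ) {B : Set X} {K : ℝ} (hK : 0 ≤ K)
    (hB : ∀ x ∈ B, l x ≤ K) : LipschitzOnWith K.toNNReal σ B := by
  refine LipschitzOnWith.of_dist_le_mul fun x hx y hy => ?_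
  rw [Real.coe_toNNReal _ hK]
  refine le_of_sq_le_sq ?_ (by positivity)
  calc dist (σ x) (σ y) ^ 2 = l x * l y * dist x y ^ 2 := hσ.dist_sq x y
    _ ≤ K * K * dist x y ^ 2 := by
      gcongr
      exacts [(hσ.factor_pos y).le, hB x hx, hB y hy]
    _ = (K * dist x y) ^ 2 := by ring

theorem fracKernel_eq_mul (hσ : MobiusWith l σ) (q e : ℝ) (v : Z → Y) (x y : X) :
    fracKernel q e v (σ x) (σ y) =
      fracKernel q e (v ∘ σ) x y * ENNReal.ofReal ((l x * l y) ^ (-e / 2)) := by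
  have hl : 0 ≤ l x * l y := (mul_pos (hσ.factor_pos x) (hσ.factor_pos y)).le
  rw [fracKernel, fracKernel, ← ENNReal.ofReal_mul (by positivity), hσ.dist_eq,
    Real.mul_rpow (by positivity) dist_nonneg, ← Real.rpow_mul hl, neg_div,
    Real.rpow_neg hl, one_div_mul_eq_div]
  simp only [comp_apply]
  congr 1
  ring

end Basic

section Hausdorff

variable {X Z : Type*} [MetricSpace X] [MeasurableSpace X] [BorelSpace X]
  [MetricSpace Z] [MeasurableSpace Z] [BorelSpace Z] {l : X → ℝ} {d : ℝ}

theorem hausdorffMeasure_image_le_of_factor_mem_Icc {σ : X → Z} (hσ : MobiusWith l σ) (hd : 0 ≤ d)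
    {B : Set X} (hB : MeasurableSet B) {a r : ℝ} (ha : 0 ≤ a) (hr : 0 ≤ r)
    (hl : ∀ x ∈ B, l x ∈ Icc a (r * a)) :
    μH[d] (σ '' B) ≤ ENNReal.ofReal (r ^ d) * ∫⁻ x in B, ENNReal.ofReal (l x ^ d) ∂μH[d] := by
  have hra : 0 ≤ r * a := mul_nonneg hr ha
  calc μH[d] (σ '' B) ≤ ENNReal.ofReal (r * a) ^ d * μH[d] B :=
      (hσ.lipschitzOnWith hra fun x hx => (hl x hx).2).hausdorffMeasure_image_le hd
    _ = ENNReal.ofReal (r ^ d) * ∫⁻ _ in B, ENNReal.ofReal (a ^ d) ∂μH[d] := by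
      rw [setLIntegral_const, ENNReal.ofReal_rpow_of_nonneg hra hd, Real.mul_rpow hr ha,
        ENNReal.ofReal_mul (by positivity), mul_assoc]
    _ ≤ ENNReal.ofReal (r ^ d) * ∫⁻ x in B, ENNReal.ofReal (l x ^ d) ∂μH[d] := by
      refine mul_le_mul_right (setLIntegral_mono' hB fun x hx => ?_) _
      gcongr
      exact (hl x hx).1

theorem hausdorffMeasure_image_le_rpow_mul {σ : X → Z} (hσ : MobiusWith l σ) (hd : 0 ≤ d)
    {B : Set X} (hB : MeasurableSet B) {r : ℝ} (hr : 1 < r) :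
    μH[d] (σ '' B) ≤ ENNReal.ofReal (r ^ d) * ∫⁻ x in B, ENNReal.ofReal (l x ^ d) ∂μH[d] := by
  have hr₀ : 0 < r := one_pos.trans hr
  let P : ℤ → Set X := fun i => B ∩ l ⁻¹' Ico (r ^ i) (r ^ (i + 1))
  have hP_union : ⋃ i, P i = B := by
    rw [← inter_iUnion, inter_eq_left]
    exact fun x _ => mem_iUnion.2 (exists_mem_Ico_zpow (hσ.factor_pos x) hr)
  have hP_meas : ∀ i, MeasurableSet (P i) := fun i =>
    hB.inter (hσ.continuous_factor.measurable measurableSet_Ico)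
  have hP_disj : Pairwise (Disjoint on P) := fun i j hij =>
    ((Disjoint.preimage l ((zpow_right_mono₀ hr.le).pairwise_disjoint_on_Ico_succ hij)).inter_left'
      B).inter_right' B
  have hP_le : ∀ i, μH[d] (σ '' P i) ≤
      ENNReal.ofReal (r ^ d) * ∫⁻ x in P i, ENNReal.ofReal (l x ^ d) ∂μH[d] := fun i => by
    refine hσ.hausdorffMeasure_image_le_of_factor_mem_Icc hd (hP_meas i) (zpow_nonneg hr₀.le i)
      hr₀.le fun x hx => ⟨hx.2.1, hx.2.2.le.trans_eq ?_⟩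
    rw [zpow_add_one₀ hr₀.ne', mul_comm]
  calc μH[d] (σ '' B) = μH[d] (⋃ i, σ '' P i) := by rw [← image_iUnion, hP_union]
    _ ≤ ∑' i, μH[d] (σ '' P i) := measure_iUnion_le _
    _ ≤ ∑' i, ENNReal.ofReal (r ^ d) * ∫⁻ x in P i, ENNReal.ofReal (l x ^ d) ∂μH[d] :=
      ENNReal.tsum_le_tsum hP_le
    _ = ENNReal.ofReal (r ^ d) * ∫⁻ x in B, ENNReal.ofReal (l x ^ d) ∂μH[d] := by
      rw [ENNReal.tsum_mul_left, ← lintegral_iUnion hP_meas hP_disj, hP_union]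

theorem hausdorffMeasure_image_le {σ : X → Z} (hσ : MobiusWith l σ) (hd : 0 ≤ d) {B : Set X}
    (hB : MeasurableSet B) :
    μH[d] (σ '' B) ≤ ∫⁻ x in B, ENNReal.ofReal (l x ^ d) ∂μH[d] := by
  have hlim : Tendsto
      (fun r : ℝ => ENNReal.ofReal (r ^ d) * ∫⁻ x in B, ENNReal.ofReal (l x ^ d) ∂μH[d])
      (𝓝[>] 1) (𝓝 (ENNReal.ofReal (1 ^ d) * ∫⁻ x in B, ENNReal.ofReal (l x ^ d) ∂μH[d])) := by
    refine ENNReal.Tendsto.mul_const (ENNReal.tendsto_ofReal ?_) (.inl (by simp))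
    exact (Real.continuousAt_rpow_const 1 d (.inl one_ne_zero)).tendsto.mono_left nhdsWithin_le_nhds
  simpa using ge_of_tendsto hlim (eventually_nhdsWithin_of_forall fun r hr =>
    hσ.hausdorffMeasure_image_le_rpow_mul hd hB hr)

theorem lintegral_comp_symm_le {σ : X ≃ₜ Z} (hσ : MobiusWith l σ) (hd : 0 ≤ d) (g : X → ℝ≥0∞) :
    ∫⁻ z, g (σ.symm z) ∂μH[d] ≤ ∫⁻ x, ENNReal.ofReal (l x ^ d) * g x ∂μH[d] := by
  have hmap : (μH[d] : Measure Z).map σ.symm ≤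
      (μH[d] : Measure X).withDensity fun x => ENNReal.ofReal (l x ^ d) := by
    refine Measure.le_iff.2 fun B hB => ?_
    rw [Measure.map_apply σ.symm.measurable hB, ← σ.image_eq_preimage_symm,
      withDensity_apply _ hB]
    exact hσ.hausdorffMeasure_image_le hd hB
  calc ∫⁻ z, g (σ.symm z) ∂μH[d] = ∫⁻ x, g x ∂(μH[d] : Measure Z).map σ.symm :=
      (lintegral_map_equiv g σ.symm.toMeasurableEquiv).symm
    _ ≤ ∫⁻ x, g x ∂(μH[d] : Measure X).withDensity fun x => ENNReal.ofReal (l x ^ d) :=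
      lintegral_mono' hmap le_rfl
    _ ≤ _ := lintegral_withDensity_le_lintegral_mul _
      (hσ.continuous_factor.measurable.pow_const d).ennreal_ofReal g

end Hausdorff

section Energy

variable {X Y Z : Type*} [MetricSpace X] [MeasurableSpace X] [BorelSpace X] [PseudoMetricSpace Y]
  [MetricSpace Z] [MeasurableSpace Z] [BorelSpace Z] {l : X → ℝ} {d : ℝ}

theorem fracEnergy_comp_symm_le {σ : X ≃ₜ Z} (hσ : MobiusWith l σ) (hd : 0 ≤ d) (q e : ℝ)
    (u : X → Y) :
    fracEnergy d q e (u ∘ σ.symm) ≤ ∫⁻ x, ∫⁻ y, fracKernel q e u x y *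
      ENNReal.ofReal ((l x * l y) ^ ((2 * d - e) / 2)) ∂μH[d] ∂μH[d] := by
  let G : X → X → ℝ≥0∞ := fun x y => fracKernel q e (u ∘ σ.symm) (σ x) (σ y)
  have hG : ∀ x y, ENNReal.ofReal (l x ^ d) * (ENNReal.ofReal (l y ^ d) * G x y) =
      fracKernel q e u x y * ENNReal.ofReal ((l x * l y) ^ ((2 * d - e) / 2)) := fun x y => by
    have hx := hσ.factor_pos x
    have hy := hσ.factor_pos y
    have hu : (u ∘ σ.symm) ∘ σ = u := by ext; simp
    have hexp : (l x * l y) ^ ((2 * d - e) / 2) = l x ^ d * (l y ^ d * (l x * l y) ^ (-e / 2)) := by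
      rw [← mul_assoc, ← Real.mul_rpow hx.le hy.le, ← Real.rpow_add (mul_pos hx hy)]
      ring_nf
    rw [hexp, ENNReal.ofReal_mul (by positivity), ENNReal.ofReal_mul (by positivity)]
    simp only [G, hσ.fracKernel_eq_mul, hu]
    ring
  calc fracEnergy d q e (u ∘ σ.symm)
      = ∫⁻ x, ∫⁻ y, G (σ.symm x) (σ.symm y) ∂μH[d] ∂μH[d] := by
        simp only [G, fracEnergy, Homeomorph.apply_symm_apply]
    _ ≤ ∫⁻ x, ENNReal.ofReal (l x ^ d) * ∫⁻ y, G x (σ.symm y) ∂μH[d] ∂μH[d] :=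
      hσ.lintegral_comp_symm_le hd fun x => ∫⁻ y, G x (σ.symm y) ∂μH[d]
    _ ≤ ∫⁻ x, ENNReal.ofReal (l x ^ d) * ∫⁻ y, ENNReal.ofReal (l y ^ d) * G x y ∂μH[d] ∂μH[d] := by
      gcongr with x
      exact hσ.lintegral_comp_symm_le hd (G x)
    _ = _ := by
      simp only [← lintegral_const_mul' _ _ ENNReal.ofReal_ne_top, hG]

theorem setLIntegral_fracKernel_le {σ : X ≃ₜ X} (hσ : MobiusWith l σ) [SecondCountableTopology X]
    [SFinite (μH[d] : Measure X)] (hd : 0 ≤ d) {q e : ℝ} (he : 2 * d < e) {u : X → Y}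
    (hu : Continuous u) (hfin : fracEnergy d q e u ≠ ∞)
    (hle : fracEnergy d q e u ≤ fracEnergy d q e (u ∘ σ.symm)) {D : Set X} (hD : MeasurableSet D)
    {m κ : ℝ} (hm : 1 < m) (hmD : ∀ x ∈ D, m ≤ l x) (hκ : 0 < κ) (hκl : ∀ x, κ ≤ l x) :
    ∫⁻ y in D, ∫⁻ x, fracKernel q e u x y ∂μH[d] ∂μH[d] ≤
      (2 * ENNReal.ofReal ((κ ^ (2 * d - e) - 1) / (1 - m ^ (2 * d - e))) + 1) *
        ∫⁻ y in Dᶜ, ∫⁻ x, fracKernel q e u x y ∂μH[d] ∂μH[d] := by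
  have hm₀ : 0 < m := one_pos.trans hm
  have hc : 2 * d - e < 0 := by linarith
  have hweight : ∀ {a : ℝ} {x y : X}, 0 < a → a ≤ l x → a ≤ l y →
      (l x * l y) ^ ((2 * d - e) / 2) ≤ a ^ (2 * d - e) := fun {a x y} ha hx hy => by
    calc (l x * l y) ^ ((2 * d - e) / 2) ≤ (a * a) ^ ((2 * d - e) / 2) :=
        Real.rpow_le_rpow_of_nonpos (by positivity)
          (mul_le_mul hx hy ha.le (hσ.factor_pos x).le) (by linarith)
      _ = a ^ (2 * d - e) := by
        rw [Real.mul_rpow ha.le ha.le, ← Real.rpow_add ha, add_halves]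
  refine setLIntegral_lintegral_le_of_lintegral_le_mul (measurable_fracKernel q e hu) ?_
    (fracKernel_comm q e u) hD (by positivity) (Real.rpow_lt_one_of_one_lt_of_neg hm hc)
    (by positivity) hfin (hle.trans (hσ.fracEnergy_comp_symm_le hd q e u))
    (fun x hx y hy => ENNReal.ofReal_le_ofReal (hweight hm₀ (hmD x hx) (hmD y hy)))
    fun x y => ENNReal.ofReal_le_ofReal (hweight hκ (hκl x) (hκl y))
  have hl := hσ.continuous_factor.measurable
  exact (((hl.comp measurable_fst).mul (hl.comp measurable_snd)).pow_const _).ennreal_ofReal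

end Energy

end MobiusWith

end Mobius

section SphereMeasure

theorem finiteAtFilter_hausdorffMeasure_of_locallyLipschitz {X Z : Type*} [MetricSpace X]
    [MeasurableSpace X] [BorelSpace X] [MetricSpace Z] [MeasurableSpace Z] [BorelSpace Z] {d : ℝ}
    [IsLocallyFiniteMeasure (μH[d] : Measure X)] (hd : 0 ≤ d) {f : X → Z}
    (hf : LocallyLipschitz f) {x : X} (hx : map f (𝓝 x) = 𝓝 (f x)) :
    (μH[d] : Measure Z).FiniteAtFilter (𝓝 (f x)) := by
  obtain ⟨K, A, hA, hlip⟩ := hf x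
  obtain ⟨B, hB, hBfin⟩ := (μH[d] : Measure X).finiteAt_nhds x
  refine ⟨f '' (A ∩ B), hx ▸ image_mem_map (inter_mem hA hB), ?_⟩
  calc μH[d] (f '' (A ∩ B)) ≤ (K : ℝ≥0∞) ^ d * μH[d] (A ∩ B) :=
      (hlip.mono inter_subset_left).hausdorffMeasure_image_le hd
    _ < ∞ := ENNReal.mul_lt_top (ENNReal.rpow_lt_top_of_nonneg hd ENNReal.coe_ne_top)
      ((measure_mono inter_subset_right).trans_lt hBfin)

variable {E : Type*} [NormedAddCommGroup E] [InnerProductSpace ℝ E]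

theorem locallyLipschitz_stereographic_symm {v : E} (hv : ‖v‖ = 1) :
    LocallyLipschitz (stereographic hv).symm := by
  have hsmooth : ContDiff ℝ 1 fun w : (ℝ ∙ v)ᗮ => ((stereographic hv).symm w : E) :=
    contDiff_stereoInvFunAux.comp (ℝ ∙ v)ᗮ.subtypeL.contDiff
  exact fun w => hsmooth.locallyLipschitz w

theorem isFiniteMeasure_hausdorffMeasure_sphere [MeasurableSpace E] [BorelSpace E] {n : ℕ}
    [Fact (Module.finrank ℝ E = n + 1)] :
    IsFiniteMeasure (μH[n] : Measure (sphere (0 : E) 1)) := by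
  have : FiniteDimensional ℝ E := .of_fact_finrank_eq_succ n
  suffices IsLocallyFiniteMeasure (μH[n] : Measure (sphere (0 : E) 1)) from
    CompactSpace.isFiniteMeasure
  refine ⟨fun v => ?_⟩
  have hv : ‖(-v : E)‖ = 1 := norm_eq_of_mem_sphere (-v)
  have hrank : Module.finrank ℝ (ℝ ∙ (-v : E))ᗮ = n :=
    Submodule.finrank_orthogonal_span_singleton (ne_zero_of_mem_unit_sphere (-v))
  have : IsLocallyFiniteMeasure (μH[n] : Measure (ℝ ∙ (-v : E))ᗮ) := by
    have := isAddHaarMeasure_hausdorffMeasure (E := (ℝ ∙ (-v : E))ᗮ)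
    rw [hrank] at this
    infer_instance
  have hzero : (stereographic hv).symm 0 = v := by
    have hmem : v ∈ (stereographic hv).source := by
      rw [stereographic_source]
      exact ne_neg_of_mem_unit_sphere ℝ v
    exact (((stereographic hv).eq_symm_apply hmem trivial).2 (stereographic_neg_apply v)).symm
  simpa only [hzero] using finiteAtFilter_hausdorffMeasure_of_locallyLipschitz n.cast_nonneg
    (locallyLipschitz_stereographic_symm hv)
    ((isOpenEmbedding_stereographic_symm hv).map_nhds_eq 0)

end SphereMeasure

section Boost

variable {E : Type*} [NormedAddCommGroup E] [InnerProductSpace ℝ E]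

/-- The conformal factor at `x` of the Möbius dilation `boostVec η e` of the unit sphere. -/
def boostFactor (η : ℝ) (e x : E) : ℝ := (Real.cosh η - Real.sinh η * ⟪x, e⟫)⁻¹

/-- The Möbius dilation of the unit sphere with attracting pole `-e` and repelling pole `e`, by
the factor `exp η`. It is the action on rays of the light cone of the Lorentz boost of rapidity
`η` along `e`, whence the hyperbolic functions. -/
def boostVec (η : ℝ) (e x : E) : E :=
  boostFactor η e x • (x + ((Real.cosh η - 1) * ⟪x, e⟫ - Real.sinh η) • e)

section UnitVectors

variable (η : ℝ) {e x y : E}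

theorem cosh_sub_sinh_mul_inner_pos (he : ‖e‖ = 1) (hx : ‖x‖ = 1) :
    0 < Real.cosh η - Real.sinh η * ⟪x, e⟫ := by
  have hinner : |⟪x, e⟫| ≤ 1 := by simpa [he, hx] using abs_real_inner_le_norm x e
  have hsinh : |Real.sinh η| < Real.cosh η :=
    abs_lt_of_sq_lt_sq (by linarith [Real.cosh_sq η]) (Real.cosh_pos η).le
  refine sub_pos.2 (lt_of_le_of_lt ?_ hsinh)
  calc Real.sinh η * ⟪x, e⟫ ≤ |Real.sinh η| * |⟪x, e⟫| := (le_abs_self _).trans (abs_mul _ _).le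
    _ ≤ |Real.sinh η| := mul_le_of_le_one_right (abs_nonneg _) hinner

theorem boostFactor_pos (he : ‖e‖ = 1) (hx : ‖x‖ = 1) : 0 < boostFactor η e x :=
  inv_pos.2 (cosh_sub_sinh_mul_inner_pos η he hx)

theorem inner_boostVec_boostVec (he : ‖e‖ = 1) (hx : ‖x‖ = 1) (hy : ‖y‖ = 1) :
    ⟪boostVec η e x, boostVec η e y⟫ =
      1 + (⟪x, y⟫ - 1) * (boostFactor η e x * boostFactor η e y) := by
  have hdx := (cosh_sub_sinh_mul_inner_pos η he hx).ne'
  have hdy := (cosh_sub_sinh_mul_inner_pos η he hy).ne'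
  have hee : ⟪e, e⟫ = 1 := inner_self_eq_one_of_norm_eq_one he
  simp only [boostVec, boostFactor, inner_smul_left, inner_smul_right, inner_add_left,
    inner_add_right, hee, real_inner_comm y e, RCLike.conj_to_real]
  field_simp
  linear_combination (⟪x, e⟫ * ⟪y, e⟫ - 1) * Real.cosh_sq η

theorem norm_boostVec (he : ‖e‖ = 1) (hx : ‖x‖ = 1) : ‖boostVec η e x‖ = 1 := by
  rw [norm_eq_sqrt_real_inner, inner_boostVec_boostVec η he hx hx,
    inner_self_eq_one_of_norm_eq_one hx]
  simp

theorem inner_boostVec_pole (he : ‖e‖ = 1) :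
    ⟪boostVec η e x, e⟫ = boostFactor η e x * (Real.cosh η * ⟪x, e⟫ - Real.sinh η) := by
  have hee : ⟪e, e⟫ = 1 := inner_self_eq_one_of_norm_eq_one he
  simp only [boostVec, inner_smul_left, inner_add_left, hee, RCLike.conj_to_real]
  ring

theorem boostFactor_neg_boostVec (he : ‖e‖ = 1) (hx : ‖x‖ = 1) :
    boostFactor (-η) e (boostVec η e x) = (boostFactor η e x)⁻¹ := by
  have hdx := (cosh_sub_sinh_mul_inner_pos η he hx).ne'
  rw [boostFactor, inner_boostVec_pole η he, Real.cosh_neg, Real.sinh_neg, boostFactor]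
  congr 1
  field_simp
  linear_combination Real.cosh_sq η

theorem boostVec_neg_boostVec (he : ‖e‖ = 1) (hx : ‖x‖ = 1) :
    boostVec (-η) e (boostVec η e x) = x := by
  have hl := (boostFactor_pos η he hx).ne'
  have hdx := (cosh_sub_sinh_mul_inner_pos η he hx).ne'
  rw [boostVec, boostFactor_neg_boostVec η he hx, inv_smul_eq_iff₀ hl,
    inner_boostVec_pole η he, Real.cosh_neg, Real.sinh_neg]
  nth_rw 1 [boostVec]
  rw [smul_add, add_assoc, smul_smul, ← add_smul, add_eq_left, smul_eq_zero]
  left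
  rw [boostFactor]
  field_simp
  linear_combination ⟪x, e⟫ * Real.cosh_sq η

end UnitVectors

theorem dist_sq_sphere (x y : sphere (0 : E) 1) :
    dist x y ^ 2 = 2 - 2 * ⟪(x : E), (y : E)⟫ := by
  rw [Subtype.dist_eq, dist_eq_norm, norm_sub_sq_real, norm_eq_of_mem_sphere,
    norm_eq_of_mem_sphere]
  ring

theorem continuous_boostFactor_sphere (e : sphere (0 : E) 1) :
    Continuous fun z : ℝ × sphere (0 : E) 1 => boostFactor z.1 (e : E) z.2 := by
  have hden : Continuous fun z : ℝ × sphere (0 : E) 1 =>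
      Real.cosh z.1 - Real.sinh z.1 * ⟪(z.2 : E), (e : E)⟫ := by
    fun_prop
  exact hden.inv₀ fun z => (cosh_sub_sinh_mul_inner_pos z.1 (norm_eq_of_mem_sphere e)
    (norm_eq_of_mem_sphere z.2)).ne'

theorem continuous_boostVec_sphere (e : sphere (0 : E) 1) :
    Continuous fun z : ℝ × sphere (0 : E) 1 => boostVec z.1 (e : E) z.2 := by
  have := continuous_boostFactor_sphere e
  unfold boostVec
  fun_prop

/-- The Möbius dilation `boostVec η e` as a homeomorphism of the unit sphere. -/
def boost (η : ℝ) (e : sphere (0 : E) 1) : sphere (0 : E) 1 ≃ₜ sphere (0 : E) 1 where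
  toFun x := ⟨boostVec η e x, mem_sphere_zero_iff_norm.2 <|
    norm_boostVec η (norm_eq_of_mem_sphere e) (norm_eq_of_mem_sphere x)⟩
  invFun x := ⟨boostVec (-η) e x, mem_sphere_zero_iff_norm.2 <|
    norm_boostVec (-η) (norm_eq_of_mem_sphere e) (norm_eq_of_mem_sphere x)⟩
  left_inv x := Subtype.ext <|
    boostVec_neg_boostVec η (norm_eq_of_mem_sphere e) (norm_eq_of_mem_sphere x)
  right_inv x := Subtype.ext <| by
    simpa only [neg_neg] using
      boostVec_neg_boostVec (-η) (norm_eq_of_mem_sphere e) (norm_eq_of_mem_sphere x)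
  continuous_toFun :=
    ((continuous_boostVec_sphere e).comp (Continuous.prodMk_right η)).subtype_mk _
  continuous_invFun :=
    ((continuous_boostVec_sphere e).comp (Continuous.prodMk_right (-η))).subtype_mk _

theorem boost_symm (η : ℝ) (e : sphere (0 : E) 1) : (boost η e).symm = boost (-η) e :=
  Homeomorph.ext fun _ => rfl

theorem boost_zero (e : sphere (0 : E) 1) : boost 0 e = Homeomorph.refl _ :=
  Homeomorph.ext fun x => Subtype.ext <| by simp [boost, boostVec, boostFactor]

theorem continuous_uncurry_boost (e : sphere (0 : E) 1) :
    Continuous fun z : ℝ × sphere (0 : E) 1 => boost z.1 e z.2 :=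
  (continuous_boostVec_sphere e).subtype_mk _

theorem homotopicIn_comp_boost {Y : Type*} [TopologicalSpace Y] {N : Set Y}
    {u : sphere (0 : E) 1 → Y} (hu : Continuous u) (huN : ∀ x, u x ∈ N) (η : ℝ)
    (e : sphere (0 : E) 1) : HomotopicIn N u (u ∘ boost η e) := by
  have hscale : Continuous fun z : unitInterval × sphere (0 : E) 1 => ((z.1 : ℝ) * η, z.2) := by
    fun_prop
  have hboost := (continuous_uncurry_boost e).comp hscale
  refine ⟨fun z => u (boost (z.1 * η) e z.2), hu.comp hboost, fun z => huN _, fun x => ?_,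
    fun x => ?_⟩
  · simp [boost_zero]
  · simp

theorem mobiusWith_boost (η : ℝ) (e : sphere (0 : E) 1) :
    MobiusWith (fun x : sphere (0 : E) 1 => boostFactor η (e : E) x) (boost η e) where
  continuous_factor := (continuous_boostFactor_sphere e).comp (Continuous.prodMk_right η)
  factor_pos x := boostFactor_pos η (norm_eq_of_mem_sphere e) (norm_eq_of_mem_sphere x)
  dist_sq x y := by
    have hinner : ⟪(boost η e x : E), (boost η e y : E)⟫ =
        1 + (⟪(x : E), (y : E)⟫ - 1) * (boostFactor η (e : E) x * boostFactor η (e : E) y) :=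
      inner_boostVec_boostVec η (norm_eq_of_mem_sphere e) (norm_eq_of_mem_sphere x)
        (norm_eq_of_mem_sphere y)
    rw [dist_sq_sphere, dist_sq_sphere, hinner]
    ring

variable {k : ℝ} (e x : sphere (0 : E) 1)

theorem boostFactor_log (hk : 0 < k) :
    boostFactor (Real.log k) (e : E) x = k / (1 + (k ^ 2 - 1) * dist x e ^ 2 / 4) := by
  have hden : k * (Real.cosh (Real.log k) - Real.sinh (Real.log k) * ⟪(x : E), (e : E)⟫) =
      1 + (k ^ 2 - 1) * dist x e ^ 2 / 4 := by
    rw [dist_sq_sphere, Real.cosh_log hk, Real.sinh_log hk]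
    field_simp
    ring
  rw [← hden, boostFactor, div_mul_cancel_left₀ hk.ne']

theorem inv_le_boostFactor_log (hk : 1 ≤ k) : k⁻¹ ≤ boostFactor (Real.log k) (e : E) x := by
  have hk₀ : 0 < k := one_pos.trans_le hk
  have hk₂ : 0 ≤ k ^ 2 - 1 := sub_nonneg.2 (one_le_pow₀ hk)
  have hdist : dist x e ^ 2 ≤ 4 := by
    have := neg_one_le_real_inner_of_norm_eq_one (norm_eq_of_mem_sphere x)
      (norm_eq_of_mem_sphere e)
    linarith [dist_sq_sphere x e]
  rw [boostFactor_log e x hk₀, le_div_iff₀ (by positivity), inv_mul_le_iff₀ hk₀]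
  linarith [mul_le_mul_of_nonneg_left hdist hk₂]

theorem half_le_boostFactor_log (hk : 1 ≤ k) (hx : dist x e ≤ 2 / k) :
    k / 2 ≤ boostFactor (Real.log k) (e : E) x := by
  have hk₀ : 0 < k := one_pos.trans_le hk
  have hk₂ : 0 ≤ k ^ 2 - 1 := sub_nonneg.2 (one_le_pow₀ hk)
  have hdist : k ^ 2 * dist x e ^ 2 ≤ 4 := by
    rw [← mul_pow, show (4 : ℝ) = 2 ^ 2 by norm_num, mul_comm]
    gcongr
    exact (le_div_iff₀ hk₀).1 hx
  rw [boostFactor_log e x hk₀]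
  gcongr
  linarith [sq_nonneg (dist x e)]

end Boost

section Constant

theorem two_rpow_sub_one_le {b B : ℝ} (hb : 0 ≤ b) (hbB : b ≤ B) :
    (2 : ℝ) ^ b - 1 ≤ 2 ^ B * b := by
  have hneg : 1 - b ≤ (2 : ℝ) ^ (-b) := by
    have hexp := Real.add_one_le_exp (Real.log 2 * -b)
    rw [← Real.rpow_def_of_pos two_pos] at hexp
    have hlog : Real.log 2 ≤ 1 := by linarith [Real.log_two_lt_d9]
    linarith [mul_le_of_le_one_left hb hlog]
  have hone : (2 : ℝ) ^ b * 2 ^ (-b) = 1 := by rw [← Real.rpow_add two_pos]; simp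
  calc (2 : ℝ) ^ b - 1 ≤ 2 ^ b * b := by
        linarith [mul_le_mul_of_nonneg_left hneg (Real.rpow_pos_of_pos two_pos b).le]
    _ ≤ 2 ^ B * b := by gcongr; norm_num

theorem mul_log_inv_le_rpow_neg_sub_one {b ρ ρ₀ : ℝ} (hb : 0 ≤ b) (hρ : 0 < ρ) (hρρ₀ : ρ ≤ ρ₀) :
    b * Real.log ρ₀⁻¹ ≤ ρ ^ (-b) - 1 := by
  have hexp := Real.add_one_le_exp (Real.log ρ * -b)
  rw [← Real.rpow_def_of_pos hρ] at hexp
  have hlog := mul_le_mul_of_nonneg_left (Real.log_le_log hρ hρρ₀) hb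
  rw [Real.log_inv]
  linarith

theorem rpow_sub_one_div_one_sub_rpow_le {b B ρ ρ₀ : ℝ} (hb : 0 < b) (hbB : b ≤ B) (hρ : 0 < ρ)
    (hρρ₀ : ρ ≤ ρ₀) (hρ₀ : ρ₀ < 1) :
    ((ρ / 2) ^ (-b) - 1) / (1 - ρ⁻¹ ^ (-b)) ≤ 2 ^ B * (1 + 1 / Real.log ρ₀⁻¹) * ρ ^ (-b) := by
  have hL : 0 < Real.log ρ₀⁻¹ := Real.log_pos ((one_lt_inv₀ (hρ.trans_le hρρ₀)).2 hρ₀)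
  have hlog := mul_log_inv_le_rpow_neg_sub_one hb.le hρ hρρ₀
  rw [Real.div_rpow hρ.le two_pos.le, Real.rpow_neg two_pos.le, div_inv_eq_mul,
    Real.inv_rpow hρ.le]
  set A := ρ ^ (-b)
  have hA : 1 < A := by linarith [mul_pos hb hL]
  have hb_le : b ≤ (A - 1) / Real.log ρ₀⁻¹ := (le_div_iff₀ hL).2 hlog
  rw [div_le_iff₀ (sub_pos.2 (inv_lt_one_of_one_lt₀ hA))]
  calc A * 2 ^ b - 1 = 2 ^ b * (A - 1) + (2 ^ b - 1) := by ring
    _ ≤ 2 ^ B * (A - 1) + 2 ^ B * b := by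
      gcongr ?_ * (A - 1) + ?_
      exacts [Real.rpow_le_rpow_of_exponent_le one_le_two hbB, two_rpow_sub_one_le hb.le hbB]
    _ ≤ 2 ^ B * (A - 1) + 2 ^ B * ((A - 1) / Real.log ρ₀⁻¹) := by gcongr
    _ = 2 ^ B * (1 + 1 / Real.log ρ₀⁻¹) * A * (1 - A⁻¹) := by
      have := hL.ne'
      field_simp

theorem two_mul_ofReal_add_one_le {a c A : ℝ} (ha : 0 ≤ a) (hA : 1 ≤ A) (hc : c ≤ a * A) :
    2 * ENNReal.ofReal c + 1 ≤ ENNReal.ofReal ((2 * a + 1) * A) := by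
  calc 2 * ENNReal.ofReal c + 1 ≤ 2 * ENNReal.ofReal (a * A) + ENNReal.ofReal A := by
        gcongr
        exact ENNReal.one_le_ofReal.2 hA
    _ = ENNReal.ofReal ((2 * a + 1) * A) := by
      rw [← ENNReal.ofReal_ofNat 2, ← ENNReal.ofReal_mul two_pos.le,
        ← ENNReal.ofReal_add (by positivity) (by positivity)]
      ring_nf

end Constant

section Main

variable {E : Type*} [NormedAddCommGroup E] [InnerProductSpace ℝ E] [MeasurableSpace E]
  [BorelSpace E] {n : ℕ} [Fact (Module.finrank ℝ E = n + 1)]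

theorem setLIntegral_ball_fracKernel_le_of_minimizer {Y : Type*} [PseudoMetricSpace Y] {q e : ℝ}
    (he : 2 * n < e) {N : Set Y} {u : sphere (0 : E) 1 → Y} (hu : Continuous u)
    (huN : ∀ x, u x ∈ N) (hfin : fracEnergy n q e u < ⊤)
    (hmin : ∀ v : sphere (0 : E) 1 → Y, Continuous v → (∀ x, v x ∈ N) → HomotopicIn N u v →
      fracEnergy n q e u ≤ fracEnergy n q e v)
    (y₀ : sphere (0 : E) 1) {ρ : ℝ} (hρ : 0 < ρ) (hρ₁ : ρ < 1) :
    ∫⁻ y in ball y₀ ρ, ∫⁻ x, fracKernel q e u x y ∂μH[n] ∂μH[n] ≤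
      (2 * ENNReal.ofReal (((ρ / 2) ^ (2 * n - e) - 1) / (1 - ρ⁻¹ ^ (2 * n - e))) + 1) *
        ∫⁻ y in (ball y₀ ρ)ᶜ, ∫⁻ x, fracKernel q e u x y ∂μH[n] ∂μH[n] := by
  have := isFiniteMeasure_hausdorffMeasure_sphere (E := E) (n := n)
  have : FiniteDimensional ℝ E := .of_fact_finrank_eq_succ n
  have hk : 1 ≤ 2 / ρ := (one_le_div₀ hρ).2 (by linarith)
  let σ := boost (Real.log (2 / ρ)) y₀
  have hle : fracEnergy n q e u ≤ fracEnergy n q e (u ∘ σ.symm) := by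
    refine hmin _ (hu.comp σ.symm.continuous) (fun x => huN _) ?_
    rw [boost_symm]
    exact homotopicIn_comp_boost hu huN _ y₀
  refine (mobiusWith_boost _ y₀).setLIntegral_fracKernel_le n.cast_nonneg he hu hfin.ne hle
    measurableSet_ball ((one_lt_inv₀ hρ).2 hρ₁) (fun x hx => ?_) (by positivity) fun x => ?_
  · have hdist : dist x y₀ ≤ 2 / (2 / ρ) := by
      rw [div_div_cancel₀ two_ne_zero]
      exact (mem_ball.1 hx).le
    convert half_le_boostFactor_log y₀ x hk hdist using 1
    field_simp
  · simpa only [inv_div] using inv_le_boostFactor_log y₀ x hk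

theorem stmt0_general (hn : 1 ≤ n) (s s₀ ρ₀ : ℝ) (hs : 0 < s) (hρ₀ : 0 < ρ₀) (hρ₀' : ρ₀ < 1) :
    ∃ C : ℝ, 0 < C ∧
      ∀ (t : ℝ), s < t → t ≤ s₀ →
      ∀ {Y : Type*} [PseudoMetricSpace Y] (N : Set Y) (u : sphere (0 : E) 1 → Y),
        Continuous u → (∀ x, u x ∈ N) →
        fracEnergy n (n / s) (n + t * (n / s)) u < ⊤ →
        (∀ v : sphere (0 : E) 1 → Y, Continuous v → (∀ x, v x ∈ N) → HomotopicIn N u v →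
          fracEnergy n (n / s) (n + t * (n / s)) u ≤
            fracEnergy n (n / s) (n + t * (n / s)) v) →
        ∀ (y₀ : sphere (0 : E) 1) (ρ : ℝ), 0 < ρ → ρ ≤ ρ₀ →
          ∫⁻ y in ball y₀ ρ, ∫⁻ x, fracKernel (n / s) (n + t * (n / s)) u x y ∂μH[n] ∂μH[n] ≤
            ENNReal.ofReal (C * ρ ^ (-(n * (t / s - 1)))) *
              ∫⁻ y in (ball y₀ ρ)ᶜ,
                ∫⁻ x, fracKernel (n / s) (n + t * (n / s)) u x y ∂μH[n] ∂μH[n] := by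
  have hL : 0 < Real.log ρ₀⁻¹ := Real.log_pos ((one_lt_inv₀ hρ₀).2 hρ₀')
  let a : ℝ := 2 ^ (n * (s₀ / s - 1)) * (1 + 1 / Real.log ρ₀⁻¹)
  have ha : 0 < a := by positivity
  refine ⟨2 * a + 1, by positivity, fun t hst ht Y _ N u hu huN hfin hmin y₀ ρ hρ hρρ₀ => ?_⟩
  have hρ₁ : ρ < 1 := hρρ₀.trans_lt hρ₀'
  have hn₀ : (0 : ℝ) < n := by exact_mod_cast hn
  set b : ℝ := n * (t / s - 1) with hb
  have hb₀ : 0 < b := mul_pos hn₀ (sub_pos.2 ((one_lt_div hs).2 hst))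
  have hexp : 2 * n - (n + t * (n / s)) = -b := by rw [hb]; ring
  grw [setLIntegral_ball_fracKernel_le_of_minimizer (by linarith) hu huN hfin hmin y₀ hρ hρ₁,
    hexp]
  gcongr
  refine two_mul_ofReal_add_one_le ha.le
    (Real.one_le_rpow_of_pos_of_le_one_of_nonpos hρ hρ₁.le (by linarith))
    (rpow_sub_one_div_one_sub_rpow_le hb₀ ?_ hρ hρρ₀ hρ₀')
  rw [hb]
  gcongr

end Main

theorem sphKer_eq_fracKernel (n M : ℕ) (q e : ℝ) (u : Sph n → EuclideanSpace ℝ (Fin M)) :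
    sphKer n M q e u = fracKernel q e u := by
  ext x y
  rw [sphKer, fracKernel, dist_eq_norm (u x)]

theorem sphEnergy_eq_fracEnergy (n M : ℕ) (t p : ℝ) (u : Sph n → EuclideanSpace ℝ (Fin M)) :
    sphEnergy n M t p u = fracEnergy n p (n + t * p) u := by
  simp only [sphEnergy, sphKer_eq_fracKernel, sphMeasure, fracEnergy]

/-- balanced energy estimate for minimizers of the non-scale-invariant
energies `E_{t,n/s}` on the sphere. -/
theorem stmt0 (n : ℕ) (hn : 1 ≤ n) (s s₀ ρ₀ : ℝ) (hs : 0 < s) (hss : s < s₀) (hs₀ : s₀ < 1)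
    (hρ₀ : 0 < ρ₀) (hρ₀' : ρ₀ < Real.sqrt (4 / 5)) :
    ∃ C : ℝ, 0 < C ∧
      ∀ (t : ℝ), s < t → t ≤ s₀ →
      ∀ (M : ℕ), 1 ≤ M →
      ∀ (N : Set (EuclideanSpace ℝ (Fin M))) (u : Sph n → EuclideanSpace ℝ (Fin M)),
        Continuous u → (∀ x, u x ∈ N) →
        sphEnergy n M t ((n : ℝ) / s) u < ⊤ →
        (∀ v : Sph n → EuclideanSpace ℝ (Fin M), Continuous v → (∀ x, v x ∈ N) →
            HomotopicIn N u v →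
            sphEnergy n M t ((n : ℝ) / s) u ≤ sphEnergy n M t ((n : ℝ) / s) v) →
        ∀ (y₀ : Sph n) (ρ : ℝ), 0 < ρ → ρ ≤ ρ₀ →
          (∫⁻ y in Metric.ball y₀ ρ,
              ∫⁻ x, sphKer n M ((n : ℝ) / s) ((n : ℝ) + t * ((n : ℝ) / s)) u x y
                ∂(sphMeasure n) ∂(sphMeasure n))
            ≤ ENNReal.ofReal (C * ρ ^ (-((n : ℝ) * (t / s - 1)))) *
              ∫⁻ y in (Metric.ball y₀ ρ)ᶜ,
                ∫⁻ x, sphKer n M ((n : ℝ) / s) ((n : ℝ) + t * ((n : ℝ) / s)) u x y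
                  ∂(sphMeasure n) ∂(sphMeasure n) := by
  have : Fact (Module.finrank ℝ (EuclideanSpace ℝ (Fin (n + 1))) = n + 1) :=
    ⟨finrank_euclideanSpace_fin⟩
  have hρ₁ : ρ₀ < 1 := hρ₀'.trans ((Real.sqrt_lt' one_pos).2 (by norm_num))
  obtain ⟨C, hC, h⟩ := stmt0_general (E := EuclideanSpace ℝ (Fin (n + 1))) hn s s₀ ρ₀ hs hρ₀ hρ₁
  refine ⟨C, hC, fun t hst ht M _ N u => ?_⟩
  simpa only [sphKer_eq_fracKernel, sphEnergy_eq_fracEnergy, sphMeasure] using h t hst ht N u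
end
end

section
/- Let n ≥ 1, M ≥ 1, 0 < s ≤ t < 1 and λ > 0. Let τ : ℝⁿ → 𝕊ⁿ∖{N_p} be the inverse stereographic projection from the north pole N_p = (0,…,0,1) ∈ ℝ^{n+1}, given by τ(w) = (2w/(1+|w|²), (|w|²−1)/(1+|w|²)); τ is a bijection from ℝⁿ onto 𝕊ⁿ∖{N_p}. For a measurable map v : 𝕊ⁿ → ℝ^M define v_λ : 𝕊ⁿ → ℝ^M by v_λ(x) := v(τ(λ·τ⁻¹(x))) for x ≠ N_p and v_λ(N_p) := v(N_p). Let S = (0,…,0,−1) be the south pole, r_λ := 2λ/√(λ²+1), and D(S,r_λ) := {x ∈ 𝕊ⁿ : |x−S| < r_λ}. Then ∫_{𝕊ⁿ}∫_{𝕊ⁿ} |v_λ(x)−v_λ(y)|^{n/s}/|x−y|^{n+t·n/s} dμ dμ ≤ (2λ)^{n(t/s−1)} ∫_{D(S,r_λ)}∫_{𝕊ⁿ} |v(x)−v(y)|^{n/s}/|x−y|^{n+t·n/s} dμ dμ + (2/λ)^{n(t/s−1)} ∫_{𝕊ⁿ∖D(S,r_λ)}∫_{𝕊ⁿ} |v(x)−v(y)|^{n/s}/|x−y|^{n+t·n/s}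 dμ dμ, with all integrals interpreted in [0,∞]. -/
open MeasureTheory Classical
open scoped ENNReal

noncomputable section

/-- Euclidean space `ℝᵏ`. -/
abbrev Euc (k : ℕ) : Type _ := EuclideanSpace ℝ (Fin k)

/-- The unit sphere `𝕊ⁿ` as a subset of `ℝ^{n+1}`. -/
def SphSet (n : ℕ) : Set (Euc (n + 1)) := Metric.sphere (0 : Euc (n + 1)) 1

/-- The north pole `N_p = (0,…,0,1)`. -/
def northPole (n : ℕ) : Euc (n + 1) := EuclideanSpace.single (Fin.last n) (1 : ℝ)

/-- The south pole `S = (0,…,0,−1)`. -/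
def southPole (n : ℕ) : Euc (n + 1) := EuclideanSpace.single (Fin.last n) (-1 : ℝ)

/-- The inverse stereographic projection from the north pole:
`τ(w) = (2w/(1+|w|²), (|w|²−1)/(1+|w|²))`. -/
def tau (n : ℕ) (w : Euc n) : Euc (n + 1) :=
  (EuclideanSpace.equiv (Fin (n + 1)) ℝ).symm fun i =>
    if h : (i : ℕ) < n then 2 * w ⟨i, h⟩ / (1 + ‖w‖ ^ 2)
    else (‖w‖ ^ 2 - 1) / (1 + ‖w‖ ^ 2)

/-- Kernel `|v(x)-v(y)|^{n/s} / |x-y|^{n + t·n/s}` in `[0,∞]`. -/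
def ker (n M : ℕ) (s t : ℝ) (v : Euc (n + 1) → Euc M) (x y : Euc (n + 1)) : ℝ≥0∞ :=
  ENNReal.ofReal (‖v x - v y‖ ^ ((n : ℝ) / s) / ‖x - y‖ ^ ((n : ℝ) + t * ((n : ℝ) / s)))

/-!
Let `σ` be the stereographic projection and `T = τ ∘ (λ • ·) ∘ σ`, so that `v_λ = v ∘ T` off the
north pole. The inverse of `T` is conformal in the strong sense
`|T⁻¹ x - T⁻¹ y|² = J x * J y * |x - y|²`. Cutting the sphere into slices on which `J` is nearly
constant, where `T⁻¹` is Lipschitz, gives `T_# μ ≤ J ^ n μ` without any area formula.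
With `e = n + t n / s`, the substitution `x ↦ T x`, `y ↦ T y` therefore turns the left-hand side
into at most the energy of `v` with the extra weight `(J x * J y) ^ (n - e / 2)`, and by symmetry
and `2ab ≤ a² + b²` this weight may be replaced by `J x ^ (2n - e)`. Since
`(J x)⁻¹ = (λ² + |σ x|²) / (λ (1 + |σ x|²))`, we have `J⁻¹ ≤ 2λ` on the cap `|σ x| < λ`, which is
`D(S, r_λ)`, and `J⁻¹ ≤ 2 / λ` outside it.
-/

open Set Function
open Filter hiding ker
open scoped NNReal Topology

lemma ennreal_two_mul_le_add_sq (a b : ℝ≥0∞) : 2 * a * b ≤ a ^ 2 + b ^ 2 := by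
  rcases eq_or_ne a ∞ with rfl | ha
  · simp
  rcases eq_or_ne b ∞ with rfl | hb
  · simp
  lift a to ℝ≥0 using ha
  lift b to ℝ≥0 using hb
  exact_mod_cast two_mul_le_add_sq a b

lemma coe_rpow_le_ofReal_rpow_neg {a : ℝ≥0} (ha : 0 < a) {c r : ℝ} (hac : (a : ℝ)⁻¹ ≤ c)
    (hr : r ≤ 0) : (a : ℝ≥0∞) ^ r ≤ ENNReal.ofReal (c ^ (-r)) := by
  rw [← ENNReal.ofReal_coe_nnreal, ENNReal.ofReal_rpow_of_pos (NNReal.coe_pos.2 ha)]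
  refine ENNReal.ofReal_le_ofReal ?_
  rw [← neg_neg r, Real.rpow_neg a.coe_nonneg, ← Real.inv_rpow a.coe_nonneg, neg_neg]
  exact Real.rpow_le_rpow (by positivity) hac (neg_nonneg.2 hr)

section SymmetricKernel

variable {α β : Type*} [MeasurableSpace α] [MeasurableSpace β]

lemma lintegral_prod_comp_le {μ : Measure α} {ν : Measure β} [SFinite μ] [SFinite ν] {T : α → β}
    {g : β → ℝ≥0∞} (hT : Measurable T) (hg : Measurable g) (hmap : μ.map T ≤ ν.withDensity g)
    {H : β × β → ℝ≥0∞} (hH : Measurable H) :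
    ∫⁻ z, H (T z.1, T z.2) ∂μ.prod μ ≤ ∫⁻ z, g z.1 * g z.2 * H z ∂ν.prod ν := by
  calc ∫⁻ z, H (T z.1, T z.2) ∂μ.prod μ
      = ∫⁻ z, H z ∂(μ.map T).prod (μ.map T) := by
        rw [Measure.map_prod_map _ _ hT hT, lintegral_map hH (hT.prodMap hT)]
        rfl
    _ ≤ ∫⁻ z, H z ∂(ν.withDensity g).prod (ν.withDensity g) :=
        lintegral_mono' (Measure.prod_mono hmap hmap) le_rfl
    _ = ∫⁻ z, g z.1 * g z.2 * H z ∂ν.prod ν := by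
        rw [prod_withDensity hg hg, lintegral_withDensity_eq_lintegral_mul _ (by fun_prop) hH]
        rfl

lemma lintegral_prod_mul_mul_le {μ : Measure α} [SFinite μ] {w : α → ℝ≥0∞} (hw : Measurable w)
    {K : α × α → ℝ≥0∞} (hK : Measurable K) (hsymm : ∀ z, K z.swap = K z) :
    ∫⁻ z, w z.1 * w z.2 * K z ∂μ.prod μ ≤ ∫⁻ z, w z.1 ^ 2 * K z ∂μ.prod μ := by
  have hswap : ∫⁻ z, w z.2 ^ 2 * K z ∂μ.prod μ = ∫⁻ z, w z.1 ^ 2 * K z ∂μ.prod μ := by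
    rw [← lintegral_prod_swap]
    simp only [hsymm, Prod.snd_swap]
  suffices h : 2 * ∫⁻ z, w z.1 * w z.2 * K z ∂μ.prod μ ≤ 2 * ∫⁻ z, w z.1 ^ 2 * K z ∂μ.prod μ from
    (ENNReal.mul_le_mul_iff_right two_ne_zero ENNReal.ofNat_ne_top).1 h
  calc 2 * ∫⁻ z, w z.1 * w z.2 * K z ∂μ.prod μ
      = ∫⁻ z, 2 * w z.1 * w z.2 * K z ∂μ.prod μ := by
        rw [← lintegral_const_mul _ (by fun_prop)]
        simp only [mul_assoc]
    _ ≤ ∫⁻ z, (w z.1 ^ 2 + w z.2 ^ 2) * K z ∂μ.prod μ :=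
        lintegral_mono fun z => mul_le_mul_left (ennreal_two_mul_le_add_sq _ _) _
    _ = 2 * ∫⁻ z, w z.1 ^ 2 * K z ∂μ.prod μ := by
        simp only [add_mul]
        rw [lintegral_add_left (by fun_prop), hswap, two_mul]

theorem lintegral_lintegral_mul_mul_comp_le {μ : Measure α} {ν : Measure β} [SFinite μ] [SFinite ν]
    {T : α → β} {g u : β → ℝ≥0∞} (hT : Measurable T) (hg : Measurable g) (hu : Measurable u)
    (hmap : μ.map T ≤ ν.withDensity g) {K : β → β → ℝ≥0∞} (hK : Measurable (uncurry K))
    (hsymm : ∀ x y, K x y = K y x) :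
    ∫⁻ x, ∫⁻ y, u (T x) * u (T y) * K (T x) (T y) ∂μ ∂μ ≤
      ∫⁻ x, (g x * u x) ^ 2 * ∫⁻ y, K x y ∂ν ∂ν := by
  set H : β × β → ℝ≥0∞ := fun z => u z.1 * u z.2 * uncurry K z
  have hH : Measurable H := by fun_prop
  calc ∫⁻ x, ∫⁻ y, H (T x, T y) ∂μ ∂μ
      = ∫⁻ z, H (T z.1, T z.2) ∂μ.prod μ :=
        lintegral_lintegral (f := fun x y => H (T x, T y)) (by fun_prop)
    _ ≤ ∫⁻ z, g z.1 * g z.2 * H z ∂ν.prod ν := lintegral_prod_comp_le hT hg hmap hH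
    _ = ∫⁻ z, (g z.1 * u z.1) * (g z.2 * u z.2) * uncurry K z ∂ν.prod ν := by
        congr 1 with z
        ring
    _ ≤ ∫⁻ z, (g z.1 * u z.1) ^ 2 * uncurry K z ∂ν.prod ν :=
        lintegral_prod_mul_mul_le (hg.mul hu) hK fun z => hsymm z.2 z.1
    _ = ∫⁻ x, (g x * u x) ^ 2 * ∫⁻ y, K x y ∂ν ∂ν := by
        rw [lintegral_prod _ (by fun_prop)]
        exact lintegral_congr fun x =>
          lintegral_const_mul ((g x * u x) ^ 2) (hK.comp measurable_prodMk_left)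

end SymmetricKernel

section Hausdorff

variable {X Y : Type*} [EMetricSpace X] [MeasurableSpace X] [BorelSpace X]
  [EMetricSpace Y] [MeasurableSpace Y] [BorelSpace Y] {d : ℝ}
  {U : X → Y} {A : Set X} {j : X → ℝ≥0}

lemma hausdorffMeasure_image_le_lintegral_of_mem_Icc (hd : 0 ≤ d) (hA : MeasurableSet A)
    {a q : ℝ≥0} (hj : ∀ x ∈ A, j x ∈ Icc a (q * a))
    (hU : ∀ x ∈ A, ∀ y ∈ A, edist (U x) (U y) ^ 2 ≤ j x * j y * edist x y ^ 2) :
    μH[d] (U '' A) ≤ (q : ℝ≥0∞) ^ d * ∫⁻ x in A, (j x : ℝ≥0∞) ^ d ∂μH[d] := by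
  have hlip : LipschitzOnWith (q * a) U A := fun x hx y hy => by
    rw [← ENNReal.pow_le_pow_left_iff two_ne_zero]
    calc edist (U x) (U y) ^ 2 ≤ j x * j y * edist x y ^ 2 := hU x hx y hy
      _ ≤ ↑(q * a) * ↑(q * a) * edist x y ^ 2 := by
        gcongr
        exacts [(hj x hx).2, (hj y hy).2]
      _ = (↑(q * a) * edist x y) ^ 2 := by ring
  calc μH[d] (U '' A) ≤ (↑(q * a) : ℝ≥0∞) ^ d * μH[d] A := hlip.hausdorffMeasure_image_le hd
    _ = (q : ℝ≥0∞) ^ d * ∫⁻ _ in A, (a : ℝ≥0∞) ^ d ∂μH[d] := by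
      rw [ENNReal.coe_mul, ENNReal.mul_rpow_of_nonneg _ _ hd, setLIntegral_const, mul_assoc]
    _ ≤ (q : ℝ≥0∞) ^ d * ∫⁻ x in A, (j x : ℝ≥0∞) ^ d ∂μH[d] := by
      refine mul_le_mul_right (setLIntegral_mono' hA fun x hx => ?_) _
      gcongr
      exact (hj x hx).1

-- On the slice `q ^ k ≤ j < q ^ (k + 1)` the map `U` is Lipschitz with a constant that exceeds `j`
-- by at most the factor `q`.
lemma hausdorffMeasure_image_le_mul_lintegral (hd : 0 ≤ d) (hA : MeasurableSet A)
    (hj : Measurable j) (hj_pos : ∀ x ∈ A, 0 < j x)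
    (hU : ∀ x ∈ A, ∀ y ∈ A, edist (U x) (U y) ^ 2 ≤ j x * j y * edist x y ^ 2)
    {q : ℝ≥0} (hq : 1 < q) :
    μH[d] (U '' A) ≤ (q : ℝ≥0∞) ^ d * ∫⁻ x in A, (j x : ℝ≥0∞) ^ d ∂μH[d] := by
  set I : ℤ → Set ℝ≥0 := fun k => Ico (q ^ k) (q ^ (k + 1))
  set B : ℤ → Set X := fun k => A ∩ j ⁻¹' I k
  have hB : ∀ k, MeasurableSet (B k) := fun k => hA.inter (hj measurableSet_Ico)
  have hA_eq : A = ⋃ k, B k := by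
    rw [← inter_iUnion, ← preimage_iUnion, eq_comm, inter_eq_left]
    exact fun x hx => mem_iUnion.2 (NNReal.exists_mem_Ico_zpow (hj_pos x hx).ne' hq)
  have hdisj : Pairwise (Disjoint on B) := fun k l hkl =>
    (((zpow_right_mono₀ hq.le).pairwise_disjoint_on_Ico_succ hkl).preimage j).mono
      inter_subset_right inter_subset_right
  have hslice : ∀ k, μH[d] (U '' B k) ≤
      (q : ℝ≥0∞) ^ d * ∫⁻ x in B k, (j x : ℝ≥0∞) ^ d ∂μH[d] := fun k => by
    refine hausdorffMeasure_image_le_lintegral_of_mem_Icc hd (hB k) (a := q ^ k) (fun x hx => ?_)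
      fun x hx y hy => hU x hx.1 y hy.1
    rw [← zpow_one_add₀ (zero_lt_one.trans hq).ne', add_comm]
    exact Ico_subset_Icc_self hx.2
  calc μH[d] (U '' A) = μH[d] (⋃ k, U '' B k) := by rw [← image_iUnion, ← hA_eq]
    _ ≤ ∑' k, μH[d] (U '' B k) := measure_iUnion_le _
    _ ≤ ∑' k, (q : ℝ≥0∞) ^ d * ∫⁻ x in B k, (j x : ℝ≥0∞) ^ d ∂μH[d] := ENNReal.tsum_le_tsum hslice
    _ = (q : ℝ≥0∞) ^ d * ∫⁻ x in A, (j x : ℝ≥0∞) ^ d ∂μH[d] := by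
      rw [ENNReal.tsum_mul_left, ← lintegral_iUnion hB hdisj, ← hA_eq]

theorem hausdorffMeasure_image_le_lintegral (hd : 0 ≤ d) (hA : MeasurableSet A)
    (hj : Measurable j) (hj_pos : ∀ x ∈ A, 0 < j x)
    (hU : ∀ x ∈ A, ∀ y ∈ A, edist (U x) (U y) ^ 2 ≤ j x * j y * edist x y ^ 2) :
    μH[d] (U '' A) ≤ ∫⁻ x in A, (j x : ℝ≥0∞) ^ d ∂μH[d] := by
  have hlim : Tendsto (fun q : ℝ≥0 => (q : ℝ≥0∞) ^ d * ∫⁻ x in A, (j x : ℝ≥0∞) ^ d ∂μH[d])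
      (𝓝[>] 1) (𝓝 (((1 : ℝ≥0) : ℝ≥0∞) ^ d * ∫⁻ x in A, (j x : ℝ≥0∞) ^ d ∂μH[d])) := by
    refine ENNReal.Tendsto.mul_const ?_ (Or.inl (by simp))
    exact ((ENNReal.continuous_rpow_const.comp ENNReal.continuous_coe).tendsto 1).mono_left
      nhdsWithin_le_nhds
  have hle := ge_of_tendsto hlim (eventually_of_mem self_mem_nhdsWithin fun q hq =>
    hausdorffMeasure_image_le_mul_lintegral hd hA hj hj_pos hU hq)
  simpa only [ENNReal.coe_one, ENNReal.one_rpow, one_mul] using hle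

theorem map_hausdorffMeasure_restrict_le_withDensity (hd : 0 ≤ d) {T : Y → X} {B : Set Y}
    (hA : MeasurableSet A) (hT : Measurable T) (hTB : MapsTo T B A) (hUT : LeftInvOn U T B)
    (hj : Measurable j) (hj_pos : ∀ x ∈ A, 0 < j x)
    (hU : ∀ x ∈ A, ∀ y ∈ A, edist (U x) (U y) ^ 2 ≤ j x * j y * edist x y ^ 2) :
    ((μH[d] : Measure Y).restrict B).map T ≤
      ((μH[d] : Measure X).restrict A).withDensity fun x => (j x : ℝ≥0∞) ^ d := by
  refine Measure.le_iff.2 fun s hs => ?_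
  rw [Measure.map_apply hT hs, Measure.restrict_apply (hT hs), withDensity_apply _ hs,
    Measure.restrict_restrict hs]
  calc μH[d] (T ⁻¹' s ∩ B) ≤ μH[d] (U '' (s ∩ A)) :=
        measure_mono fun y hy => ⟨T y, ⟨hy.1, hTB hy.2⟩, hUT hy.2⟩
    _ ≤ ∫⁻ x in s ∩ A, (j x : ℝ≥0∞) ^ d ∂μH[d] :=
        hausdorffMeasure_image_le_lintegral hd (hs.inter hA) hj (fun x hx => hj_pos x hx.2)
          fun x hx y hy => hU x hx.2 y hy.2

lemma sigmaFinite_hausdorffMeasure_restrict_range {K : ℝ≥0} (hU : LipschitzWith K U) (hd : 0 ≤ d)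
    [SigmaFinite (μH[d] : Measure X)] (hrange : MeasurableSet (range U)) :
    SigmaFinite ((μH[d] : Measure Y).restrict (range U)) := by
  set S := spanningSets (μH[d] : Measure X)
  refine ⟨⟨⟨fun k => U '' S k ∪ (range U)ᶜ, fun _ => trivial, fun k => ?_, ?_⟩⟩⟩
  · refine (measure_union_le _ _).trans_lt (ENNReal.add_lt_top.2 ⟨?_, ?_⟩)
    · calc (μH[d] : Measure Y).restrict (range U) (U '' S k)
          ≤ K ^ d * μH[d] (S k) :=
            (Measure.restrict_apply_le _ _).trans (hU.hausdorffMeasure_image_le hd _)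
        _ < ∞ := ENNReal.mul_lt_top (ENNReal.rpow_lt_top_of_nonneg hd ENNReal.coe_ne_top)
            (measure_spanningSets_lt_top _ k)
    · simp [Measure.restrict_apply hrange.compl]
  · rw [← iUnion_union, ← image_iUnion, iUnion_spanningSets, image_univ, union_compl_self]

end Hausdorff

section ConformalEnergy

lemma edist_rpow_eq_of_edist_sq_eq {X Y : Type*} [PseudoMetricSpace X] [PseudoEMetricSpace Y]
    {x y : X} {x' y' : Y} {a b : ℝ≥0} (h : edist x' y' ^ 2 = a * b * edist x y ^ 2) (r : ℝ) :
    edist x' y' ^ r = (a : ℝ≥0∞) ^ (r / 2) * (b : ℝ≥0∞) ^ (r / 2) * edist x y ^ r := by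
  have hsq : ∀ c : ℝ≥0∞, c ^ r = (c ^ 2) ^ (r / 2) := fun c => by
    rw [← ENNReal.rpow_natCast_mul]
    congr 1
    push_cast
    ring
  have htop : edist x y ^ 2 ≠ ∞ := ENNReal.pow_ne_top (edist_ne_top x y)
  rw [hsq (edist x' y'), hsq (edist x y), h,
    ENNReal.mul_rpow_of_ne_top (by simp [ENNReal.mul_ne_top]) htop,
    ENNReal.mul_rpow_of_ne_top ENNReal.coe_ne_top ENNReal.coe_ne_top]

variable {X Y : Type*} [MetricSpace X] [MeasurableSpace X] [BorelSpace X]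
  [SecondCountableTopology X] [EMetricSpace Y] [MeasurableSpace Y] [BorelSpace Y]
  {U : X → Y} {A : Set X} {j : X → ℝ≥0}

theorem lintegral_lintegral_comp_mul_edist_rpow_le {d : ℝ} (hd : 0 ≤ d) (e : ℝ) {T : Y → X}
    {B : Set Y} [SFinite ((μH[d] : Measure X).restrict A)]
    [SFinite ((μH[d] : Measure Y).restrict B)]
    (hA : MeasurableSet A) (hB : MeasurableSet B) (hT : Measurable T) (hTB : MapsTo T B A)
    (hUT : LeftInvOn U T B) (hj : Measurable j) (hj_pos : ∀ x ∈ A, 0 < j x)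
    (hU : ∀ x ∈ A, ∀ y ∈ A, edist (U x) (U y) ^ 2 = j x * j y * edist x y ^ 2)
    {W : X → X → ℝ≥0∞} (hW : Measurable (uncurry W)) (hsymm : ∀ x y, W x y = W y x) :
    ∫⁻ x in B, ∫⁻ y in B, W (T x) (T y) * edist x y ^ (-e) ∂μH[d] ∂μH[d] ≤
      ∫⁻ x in A, (j x : ℝ≥0∞) ^ (2 * d - e) *
        ∫⁻ y in A, W x y * edist x y ^ (-e) ∂μH[d] ∂μH[d] := by
  set K : X → X → ℝ≥0∞ := fun x y => W x y * edist x y ^ (-e)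
  have hK : Measurable (uncurry K) := by unfold K uncurry; fun_prop
  have hK_symm : ∀ x y, K x y = K y x := fun x y => by
    simp only [K, hsymm x y, edist_comm x y]
  have hpull : ∀ x ∈ B, ∀ y ∈ B, W (T x) (T y) * edist x y ^ (-e) =
      (j (T x) : ℝ≥0∞) ^ (-e / 2) * (j (T y) : ℝ≥0∞) ^ (-e / 2) * K (T x) (T y) := by
    intro x hx y hy
    have h := edist_rpow_eq_of_edist_sq_eq (hU _ (hTB hx) _ (hTB hy)) (-e)
    rw [hUT hx, hUT hy] at h
    rw [h, mul_left_comm]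
  have hpow : ∀ x ∈ A,
      ((j x : ℝ≥0∞) ^ d * (j x : ℝ≥0∞) ^ (-e / 2)) ^ 2 = (j x : ℝ≥0∞) ^ (2 * d - e) := by
    intro x hx
    rw [← ENNReal.rpow_add _ _ (ENNReal.coe_ne_zero.2 (hj_pos x hx).ne') ENNReal.coe_ne_top,
      ← ENNReal.rpow_mul_natCast]
    congr 1
    push_cast
    ring
  calc ∫⁻ x in B, ∫⁻ y in B, W (T x) (T y) * edist x y ^ (-e) ∂μH[d] ∂μH[d]
      = ∫⁻ x in B, ∫⁻ y in B, (j (T x) : ℝ≥0∞) ^ (-e / 2) * (j (T y) : ℝ≥0∞) ^ (-e / 2) *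
          K (T x) (T y) ∂μH[d] ∂μH[d] :=
        setLIntegral_congr_fun hB fun x hx => setLIntegral_congr_fun hB fun y hy =>
          hpull x hx y hy
    _ ≤ ∫⁻ x in A, ((j x : ℝ≥0∞) ^ d * (j x : ℝ≥0∞) ^ (-e / 2)) ^ 2 *
          ∫⁻ y in A, K x y ∂μH[d] ∂μH[d] :=
        lintegral_lintegral_mul_mul_comp_le (u := fun x => (j x : ℝ≥0∞) ^ (-e / 2)) hT
          (by fun_prop) (by fun_prop)
          (map_hausdorffMeasure_restrict_le_withDensity hd hA hT hTB hUT hj hj_pos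
            fun x hx y hy => (hU x hx y hy).le) hK hK_symm
    _ = ∫⁻ x in A, (j x : ℝ≥0∞) ^ (2 * d - e) *
          ∫⁻ y in A, W x y * edist x y ^ (-e) ∂μH[d] ∂μH[d] :=
        setLIntegral_congr_fun hA fun x hx => by rw [hpow x hx]

end ConformalEnergy

section Stereographic

variable {n : ℕ}

lemma tau_castSucc (w : Euc n) (i : Fin n) : tau n w i.castSucc = 2 * w i / (1 + ‖w‖ ^ 2) := by
  simp [tau]

lemma tau_last (w : Euc n) : tau n w (Fin.last n) = (‖w‖ ^ 2 - 1) / (1 + ‖w‖ ^ 2) := by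
  simp [tau]

lemma inner_tau (w z : Euc n) :
    inner ℝ (tau n w) (tau n z) =
      (4 * inner ℝ w z + (‖w‖ ^ 2 - 1) * (‖z‖ ^ 2 - 1)) / ((1 + ‖w‖ ^ 2) * (1 + ‖z‖ ^ 2)) := by
  simp only [PiLp.inner_apply, Fin.sum_univ_castSucc, tau_castSucc, tau_last, RCLike.inner_apply,
    conj_trivial]
  rw [add_div, Finset.mul_sum, Finset.sum_div]
  congr 1
  · refine Finset.sum_congr rfl fun i _ => ?_
    field_simp
    ring
  · field_simp

lemma norm_tau (w : Euc n) : ‖tau n w‖ = 1 := by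
  rw [← sq_eq_sq₀ (norm_nonneg _) zero_le_one, ← real_inner_self_eq_norm_sq, inner_tau,
    real_inner_self_eq_norm_sq]
  field_simp
  ring

lemma norm_tau_sub_tau_sq (w z : Euc n) :
    ‖tau n w - tau n z‖ ^ 2 = 4 * ‖w - z‖ ^ 2 / ((1 + ‖w‖ ^ 2) * (1 + ‖z‖ ^ 2)) := by
  rw [norm_sub_sq_real, norm_sub_sq_real, norm_tau, norm_tau, inner_tau]
  field_simp
  ring

lemma lipschitzWith_tau : LipschitzWith 2 (tau n) := by
  refine LipschitzWith.of_dist_le_mul fun w z => ?_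
  rw [dist_eq_norm, dist_eq_norm, NNReal.coe_ofNat, ← sq_le_sq₀ (by positivity) (by positivity),
    norm_tau_sub_tau_sq, mul_pow]
  have h : 1 ≤ (1 + ‖w‖ ^ 2) * (1 + ‖z‖ ^ 2) :=
    one_le_mul_of_one_le_of_one_le (by simp) (by simp)
  refine (div_le_self (by positivity) h).trans_eq ?_
  norm_num

/-- The stereographic projection from the north pole, i.e. the inverse of `tau` on the punctured
sphere; at points of height `1` it takes the junk value `0`. -/
def stereo (n : ℕ) (x : Euc (n + 1)) : Euc n :=
  WithLp.toLp 2 fun i => x i.castSucc / (1 - x (Fin.last n))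

lemma stereo_tau (w : Euc n) : stereo n (tau n w) = w := by
  ext i
  have h : 1 - (‖w‖ ^ 2 - 1) / (1 + ‖w‖ ^ 2) = 2 / (1 + ‖w‖ ^ 2) := by
    field_simp
    ring
  simp only [stereo, tau_castSucc, tau_last, h]
  field_simp

@[fun_prop]
lemma measurable_stereo : Measurable (stereo n) := by
  unfold stereo
  fun_prop

lemma apply_last_lt_one_of_mem_sphSet_sdiff {x : Euc (n + 1)} (hx : x ∈ SphSet n \ {northPole n}) :
    x (Fin.last n) < 1 := by
  have hnorm : ‖x‖ = 1 := mem_sphere_zero_iff_norm.1 hx.1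
  have hpos : 0 < ‖x - northPole n‖ ^ 2 := pow_pos (norm_sub_pos_iff.2 hx.2) 2
  rw [norm_sub_sq_real, hnorm] at hpos
  simp [northPole, EuclideanSpace.inner_single_right] at hpos
  linarith

lemma norm_stereo_sq {x : Euc (n + 1)} (hx : x ∈ SphSet n \ {northPole n}) :
    ‖stereo n x‖ ^ 2 = (1 + x (Fin.last n)) / (1 - x (Fin.last n)) := by
  have hlast : 1 - x (Fin.last n) ≠ 0 := (sub_pos.2 (apply_last_lt_one_of_mem_sphSet_sdiff hx)).ne'
  have hnorm : ∑ i : Fin n, x i.castSucc ^ 2 = 1 - x (Fin.last n) ^ 2 := by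
    have h : ‖x‖ ^ 2 = 1 := by rw [mem_sphere_zero_iff_norm.1 hx.1, one_pow]
    rw [EuclideanSpace.real_norm_sq_eq, Fin.sum_univ_castSucc] at h
    linarith
  simp only [EuclideanSpace.real_norm_sq_eq, stereo, div_pow]
  rw [← Finset.sum_div, hnorm]
  field_simp
  ring

lemma tau_stereo {x : Euc (n + 1)} (hx : x ∈ SphSet n \ {northPole n}) :
    tau n (stereo n x) = x := by
  have hlast : 1 - x (Fin.last n) ≠ 0 := (sub_pos.2 (apply_last_lt_one_of_mem_sphSet_sdiff hx)).ne'
  have hden : 1 + (1 + x (Fin.last n)) / (1 - x (Fin.last n)) = 2 / (1 - x (Fin.last n)) := by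
    field_simp
    ring
  ext i
  refine Fin.lastCases ?_ (fun i => ?_) i
  · rw [tau_last, norm_stereo_sq hx, hden]
    field_simp
    ring
  · rw [tau_castSucc, norm_stereo_sq hx, hden]
    simp only [stereo]
    field_simp

lemma tau_ne_northPole (w : Euc n) : tau n w ≠ northPole n := by
  intro h
  have hlast := congrArg (fun x : Euc (n + 1) => x (Fin.last n)) h
  simp only [tau_last, northPole, PiLp.single_apply, if_true] at hlast
  rw [div_eq_one_iff_eq (by positivity)] at hlast
  linarith

lemma range_tau : range (tau n) = SphSet n \ {northPole n} := by
  refine Subset.antisymm (range_subset_iff.2 fun w => ⟨?_, tau_ne_northPole w⟩) fun x hx =>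
    ⟨stereo n x, tau_stereo hx⟩
  exact mem_sphere_zero_iff_norm.2 (norm_tau w)

lemma measurableSet_sphSet : MeasurableSet (SphSet n) := Metric.isClosed_sphere.measurableSet

lemma measurableSet_range_tau : MeasurableSet (range (tau n)) := by
  rw [range_tau]
  exact measurableSet_sphSet.diff (measurableSet_singleton _)

lemma hausdorffMeasure_restrict_sphSet (hn : 1 ≤ n) :
    (μH[(n : ℝ)] : Measure (Euc (n + 1))).restrict (SphSet n) = μH[n].restrict (range (tau n)) := by
  have : NullSingletonClass (μH[(n : ℝ)] : Measure (Euc (n + 1))) :=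
    Measure.nullSingletonClass_hausdorff _ (by exact_mod_cast hn)
  rw [range_tau]
  exact Measure.restrict_congr_set (sdiff_null_ae_eq_self (measure_singleton _)).symm

instance sigmaFinite_hausdorffMeasure_restrict_range_tau :
    SigmaFinite ((μH[(n : ℝ)] : Measure (Euc (n + 1))).restrict (range (tau n))) := by
  have : SigmaFinite (μH[(n : ℝ)] : Measure (Euc n)) := by
    rw [show (n : ℝ) = Module.finrank ℝ (Euc n) by simp]
    infer_instance
  exact sigmaFinite_hausdorffMeasure_restrict_range lipschitzWith_tau n.cast_nonneg
    measurableSet_range_tau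

lemma tau_zero : tau n 0 = southPole n := by
  ext i
  refine Fin.lastCases ?_ (fun i => ?_) i
  · simp [tau_last, southPole]
  · simp [tau_castSucc, southPole]

lemma tau_mem_ball_southPole_iff {lam : ℝ} (hlam : 0 < lam) (w : Euc n) :
    tau n w ∈ Metric.ball (southPole n) (2 * lam / √(lam ^ 2 + 1)) ↔ ‖w‖ < lam := by
  rw [Metric.mem_ball, dist_eq_norm, ← tau_zero, ← sq_lt_sq₀ (by positivity) (by positivity),
    norm_tau_sub_tau_sq, div_pow, Real.sq_sqrt (by positivity), sub_zero, norm_zero,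
    div_lt_div_iff₀ (by positivity) (by positivity), ← sq_lt_sq₀ (norm_nonneg w) hlam.le]
  constructor <;> intro h <;> nlinarith

end Stereographic

section Dilation

variable {n : ℕ} {lam : ℝ}

/-- The conformal dilation of the sphere by `lam`, i.e. the map `τ ∘ (lam • ·) ∘ τ⁻¹`. -/
def dilation (n : ℕ) (lam : ℝ) (x : Euc (n + 1)) : Euc (n + 1) := tau n (lam • stereo n x)

/-- The conformal factor of `dilation n lam`, i.e. the factor by which it scales
infinitesimal distances. -/
def conformalFactor (n : ℕ) (lam : ℝ) (x : Euc (n + 1)) : ℝ≥0 :=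
  ‖lam‖₊ * (1 + ‖stereo n x‖₊ ^ 2) / (1 + ‖lam • stereo n x‖₊ ^ 2)

lemma dilation_tau (w : Euc n) : dilation n lam (tau n w) = tau n (lam • w) := by
  rw [dilation, stereo_tau]

@[fun_prop]
lemma measurable_dilation : Measurable (dilation n lam) :=
  lipschitzWith_tau.continuous.measurable.comp (measurable_stereo.const_smul lam)

@[fun_prop]
lemma measurable_conformalFactor : Measurable (conformalFactor n lam) := by
  unfold conformalFactor
  fun_prop

lemma conformalFactor_pos (hlam : lam ≠ 0) (x : Euc (n + 1)) : 0 < conformalFactor n lam x := by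
  have := nnnorm_pos.2 hlam
  unfold conformalFactor
  positivity

lemma coe_conformalFactor_tau (w : Euc n) :
    (conformalFactor n lam (tau n w) : ℝ) = |lam| * (1 + ‖w‖ ^ 2) / (1 + lam ^ 2 * ‖w‖ ^ 2) := by
  simp [conformalFactor, stereo_tau, norm_smul, mul_pow]

lemma edist_dilation_sq {x y : Euc (n + 1)} (hx : x ∈ range (tau n)) (hy : y ∈ range (tau n)) :
    edist (dilation n lam x) (dilation n lam y) ^ 2 =
      conformalFactor n lam x * conformalFactor n lam y * edist x y ^ 2 := by
  obtain ⟨w, rfl⟩ := hx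
  obtain ⟨z, rfl⟩ := hy
  rw [edist_nndist, edist_nndist]
  norm_cast
  rw [← NNReal.coe_inj]
  push_cast
  rw [dist_eq_norm, dist_eq_norm, dilation_tau, dilation_tau, norm_tau_sub_tau_sq,
    norm_tau_sub_tau_sq, coe_conformalFactor_tau, coe_conformalFactor_tau, ← smul_sub]
  simp only [norm_smul, mul_pow, Real.norm_eq_abs, sq_abs]
  field_simp
  rw [sq_abs, mul_comm]

lemma mapsTo_dilation : MapsTo (dilation n lam) (range (tau n)) (range (tau n)) :=
  fun _ _ => mem_range_self _

lemma leftInvOn_dilation_inv (hlam : lam ≠ 0) :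
    LeftInvOn (dilation n lam⁻¹) (dilation n lam) (range (tau n)) := by
  rintro _ ⟨w, rfl⟩
  rw [dilation_tau, dilation_tau, inv_smul_smul₀ hlam]

lemma inv_conformalFactor_inv_tau (hlam : 0 < lam) (w : Euc n) :
    (conformalFactor n lam⁻¹ (tau n w) : ℝ)⁻¹ = (lam ^ 2 + ‖w‖ ^ 2) / (lam * (1 + ‖w‖ ^ 2)) := by
  rw [coe_conformalFactor_tau, abs_of_pos (inv_pos.2 hlam)]
  field_simp

lemma inv_conformalFactor_inv_le_of_mem_ball (hlam : 0 < lam) {x : Euc (n + 1)}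
    (hx : x ∈ range (tau n))
    (hball : x ∈ Metric.ball (southPole n) (2 * lam / √(lam ^ 2 + 1))) :
    (conformalFactor n lam⁻¹ x : ℝ)⁻¹ ≤ 2 * lam := by
  obtain ⟨w, rfl⟩ := hx
  have hw : ‖w‖ ^ 2 ≤ lam ^ 2 := by
    gcongr
    exact ((tau_mem_ball_southPole_iff hlam w).1 hball).le
  rw [inv_conformalFactor_inv_tau hlam, div_le_iff₀ (by positivity)]
  nlinarith [mul_nonneg (sq_nonneg lam) (sq_nonneg ‖w‖)]

lemma inv_conformalFactor_inv_le_of_notMem_ball (hlam : 0 < lam) {x : Euc (n + 1)}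
    (hx : x ∈ range (tau n))
    (hball : x ∉ Metric.ball (southPole n) (2 * lam / √(lam ^ 2 + 1))) :
    (conformalFactor n lam⁻¹ x : ℝ)⁻¹ ≤ 2 / lam := by
  obtain ⟨w, rfl⟩ := hx
  have hw : lam ^ 2 ≤ ‖w‖ ^ 2 := by
    gcongr
    exact not_lt.1 (mt (tau_mem_ball_southPole_iff hlam w).2 hball)
  rw [inv_conformalFactor_inv_tau hlam, div_le_div_iff₀ (by positivity) hlam]
  nlinarith

lemma lintegral_conformalFactor_inv_rpow_mul_le (hn : 1 ≤ n) (hlam : 0 < lam) {r : ℝ} (hr : r ≤ 0)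
    (F : Euc (n + 1) → ℝ≥0∞) :
    ∫⁻ x in SphSet n, (conformalFactor n lam⁻¹ x : ℝ≥0∞) ^ r * F x ∂μH[(n : ℝ)] ≤
      ENNReal.ofReal ((2 * lam) ^ (-r)) *
          ∫⁻ x in SphSet n ∩ Metric.ball (southPole n) (2 * lam / √(lam ^ 2 + 1)), F x ∂μH[(n : ℝ)]
        + ENNReal.ofReal ((2 / lam) ^ (-r)) *
          ∫⁻ x in SphSet n \ Metric.ball (southPole n) (2 * lam / √(lam ^ 2 + 1)), F x
            ∂μH[(n : ℝ)] := by
  set D := Metric.ball (southPole n) (2 * lam / √(lam ^ 2 + 1))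
  set ν : Measure (Euc (n + 1)) := μH[(n : ℝ)].restrict (SphSet n) with hν
  have hD : MeasurableSet D := measurableSet_ball
  have hrange : ∀ᵐ x ∂ν, x ∈ range (tau n) := by
    rw [hν, hausdorffMeasure_restrict_sphSet hn]
    exact ae_restrict_mem measurableSet_range_tau
  have hpos : ∀ x, 0 < conformalFactor n lam⁻¹ x := conformalFactor_pos (inv_ne_zero hlam.ne')
  calc ∫⁻ x, (conformalFactor n lam⁻¹ x : ℝ≥0∞) ^ r * F x ∂ν
      = ∫⁻ x in D, (conformalFactor n lam⁻¹ x : ℝ≥0∞) ^ r * F x ∂ν +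
          ∫⁻ x in Dᶜ, (conformalFactor n lam⁻¹ x : ℝ≥0∞) ^ r * F x ∂ν :=
        (lintegral_add_compl _ hD).symm
    _ ≤ ∫⁻ x in D, ENNReal.ofReal ((2 * lam) ^ (-r)) * F x ∂ν +
          ∫⁻ x in Dᶜ, ENNReal.ofReal ((2 / lam) ^ (-r)) * F x ∂ν := by
        refine add_le_add (setLIntegral_mono_ae' hD ?_) (setLIntegral_mono_ae' hD.compl ?_) <;>
          filter_upwards [hrange] with x hx hxD <;> gcongr <;>
          refine coe_rpow_le_ofReal_rpow_neg (hpos x) ?_ hr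
        · exact inv_conformalFactor_inv_le_of_mem_ball hlam hx hxD
        · exact inv_conformalFactor_inv_le_of_notMem_ball hlam hx hxD
    _ = _ := by
        rw [lintegral_const_mul' _ _ ENNReal.ofReal_ne_top,
          lintegral_const_mul' _ _ ENNReal.ofReal_ne_top, Measure.restrict_restrict hD,
          Measure.restrict_restrict hD.compl, inter_comm, inter_comm Dᶜ, sdiff_eq]

end Dilation

lemma ker_eq_edist_rpow_mul {n M : ℕ} {s : ℝ} (hns : 0 < (n : ℝ) / s) (t : ℝ)
    (v : Euc (n + 1) → Euc M) (x y : Euc (n + 1)) :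
    ker n M s t v x y =
      edist (v x) (v y) ^ ((n : ℝ) / s) * edist x y ^ (-((n : ℝ) + t * ((n : ℝ) / s))) := by
  rcases eq_or_ne x y with rfl | hxy
  · simp [ker, Real.zero_rpow hns.ne', ENNReal.zero_rpow_of_pos hns]
  · rw [ker, edist_dist, edist_dist, dist_eq_norm, dist_eq_norm,
      ENNReal.ofReal_rpow_of_nonneg (norm_nonneg _) hns.le,
      ENNReal.ofReal_rpow_of_pos (norm_sub_pos_iff.2 hxy), ← ENNReal.ofReal_mul (by positivity),
      Real.rpow_neg (norm_nonneg _), div_eq_mul_inv]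

theorem stmt1_general {n : ℕ} (hn : 1 ≤ n) {e lam : ℝ} (he : 2 * n ≤ e) (hlam : 0 < lam)
    {W Wlam : Euc (n + 1) → Euc (n + 1) → ℝ≥0∞} (hW : Measurable (uncurry W))
    (hsymm : ∀ x y, W x y = W y x)
    (hWlam : ∀ w z, Wlam (tau n w) (tau n z) = W (tau n (lam • w)) (tau n (lam • z))) :
    ∫⁻ x in SphSet n, ∫⁻ y in SphSet n, Wlam x y * edist x y ^ (-e) ∂μH[(n : ℝ)] ∂μH[(n : ℝ)] ≤
      ENNReal.ofReal ((2 * lam) ^ (e - 2 * n)) *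
          ∫⁻ x in SphSet n ∩ Metric.ball (southPole n) (2 * lam / √(lam ^ 2 + 1)),
            ∫⁻ y in SphSet n, W x y * edist x y ^ (-e) ∂μH[(n : ℝ)] ∂μH[(n : ℝ)]
        + ENNReal.ofReal ((2 / lam) ^ (e - 2 * n)) *
          ∫⁻ x in SphSet n \ Metric.ball (southPole n) (2 * lam / √(lam ^ 2 + 1)),
            ∫⁻ y in SphSet n, W x y * edist x y ^ (-e) ∂μH[(n : ℝ)] ∂μH[(n : ℝ)] := by
  have hdil : ∀ x ∈ range (tau n), ∀ y ∈ range (tau n),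
      Wlam x y = W (dilation n lam x) (dilation n lam y) := by
    rintro _ ⟨w, rfl⟩ _ ⟨z, rfl⟩
    rw [hWlam, dilation_tau, dilation_tau]
  have henergy := lintegral_lintegral_comp_mul_edist_rpow_le n.cast_nonneg e
    measurableSet_range_tau measurableSet_range_tau measurable_dilation mapsTo_dilation
    (leftInvOn_dilation_inv hlam.ne') measurable_conformalFactor
    (fun x _ => conformalFactor_pos (inv_ne_zero hlam.ne') x)
    (fun _ hx _ hy => edist_dilation_sq hx hy) hW hsymm
  rw [← neg_sub (2 * (n : ℝ)) e]
  refine le_trans (le_of_eq_of_le ?_ henergy) ?_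
  · rw [hausdorffMeasure_restrict_sphSet hn]
    exact setLIntegral_congr_fun measurableSet_range_tau fun x hx =>
      setLIntegral_congr_fun measurableSet_range_tau fun y hy => by rw [hdil x hx y hy]
  · rw [← hausdorffMeasure_restrict_sphSet hn]
    exact lintegral_conformalFactor_inv_rpow_mul_le hn hlam (by linarith) _

/-- energy estimate for the conformal rescaling `v_λ` of a map `v` on `𝕊ⁿ`. -/
theorem stmt1 (n M : ℕ) (hn : 1 ≤ n) (hM : 1 ≤ M) (s t : ℝ)
    (hs : 0 < s) (hst : s ≤ t) (ht : t < 1) (lam : ℝ) (hlam : 0 < lam)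
    (v : Euc (n + 1) → Euc M) (hv : Measurable v)
    -- `tauInv` is the inverse of the bijection `τ : ℝⁿ → 𝕊ⁿ∖{N_p}`
    (tauInv : Euc (n + 1) → Euc n)
    (hmem : ∀ w : Euc n, tau n w ∈ SphSet n \ {northPole n})
    (hleft : ∀ w : Euc n, tauInv (tau n w) = w)
    (hright : ∀ x ∈ SphSet n \ {northPole n}, tau n (tauInv x) = x) :
    -- the rescaled map `v_λ`
    (∫⁻ x in SphSet n, ∫⁻ y in SphSet n,
        ker n M s t
          (fun z => if z = northPole n then v (northPole n) else v (tau n (lam • tauInv z)))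
          x y ∂μH[(n : ℝ)] ∂μH[(n : ℝ)])
      ≤ ENNReal.ofReal ((2 * lam) ^ ((n : ℝ) * (t / s - 1))) *
          (∫⁻ x in SphSet n ∩ Metric.ball (southPole n) (2 * lam / Real.sqrt (lam ^ 2 + 1)),
            ∫⁻ y in SphSet n, ker n M s t v x y ∂μH[(n : ℝ)] ∂μH[(n : ℝ)])
        + ENNReal.ofReal ((2 / lam) ^ ((n : ℝ) * (t / s - 1))) *
          (∫⁻ x in SphSet n \ Metric.ball (southPole n) (2 * lam / Real.sqrt (lam ^ 2 + 1)),
            ∫⁻ y in SphSet n, ker n M s t v x y ∂μH[(n : ℝ)] ∂μH[(n : ℝ)]) := by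
  have hns : 0 < (n : ℝ) / s := div_pos (by exact_mod_cast hn) hs
  have he : (n : ℝ) * (t / s - 1) = n + t * (n / s) - 2 * n := by ring
  have he_nonneg : 0 ≤ (n : ℝ) * (t / s - 1) :=
    mul_nonneg n.cast_nonneg (sub_nonneg.2 ((one_le_div hs).2 hst))
  simp only [ker_eq_edist_rpow_mul hns, he]
  refine stmt1_general hn (by linarith) hlam (by fun_prop)
    (fun x y => by rw [edist_comm]) fun w z => ?_
  simp only [if_neg (tau_ne_northPole _), hleft]
end
end

section
/- For every α > 1 there exists a constant C(α) > 0 (independent of the dimension) such that for every n ≥ 1, every R > 0, every λ ∈ (0,1) and all unit vectors θ, ω ∈ 𝕊^{n−1} ⊆ ℝⁿ: ∫_{λR}^{R} ∫_{λR}^{R} |rθ − ρω|^{−α} dr dρ ≤ C(α) · (1−λ) · λ^{1−α} · R · |Rθ − Rω|^{1−α}, where both sides are interpreted as values in [0,∞] (both sides equal ∞ when θ = ω). -/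
open MeasureTheory
open scoped ENNReal

noncomputable section

/-!
For unit vectors `θ, ω` and `r, ρ ≥ s` both `|r - ρ|` and `s |θ - ω|` are at most `|r θ - ρ ω|`, the
second because `|r θ - ρ ω|² = (r - ρ)² + r ρ |θ - ω|²`. Hence the integral over `ρ` is at most
`∫ max(|t|, s |θ - ω|)^(-α) dt`, a constant multiple of `(s |θ - ω|)^(1 - α)`; integrating this
over `r ∈ [λ R, R]` with `s = λ R` produces the factor `(1 - λ) R`.
-/

theorem lintegral_comp_abs (f : ℝ → ℝ≥0∞) : ∫⁻ x, f |x| = 2 * ∫⁻ x in Set.Ioi 0, f x := by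
  have right : ∫⁻ x in Set.Ioi 0, f |x| = ∫⁻ x in Set.Ioi 0, f x :=
    setLIntegral_congr_fun measurableSet_Ioi fun x hx ↦ by rw [abs_of_pos hx]
  have left : ∫⁻ x in Set.Iio 0, f |x| = ∫⁻ x in Set.Ioi 0, f |x| := by
    simpa using (Measure.measurePreserving_neg (volume : Measure ℝ)).setLIntegral_comp_preimage_emb
      (MeasurableEquiv.neg ℝ).measurableEmbedding (fun x ↦ f |x|) (Set.Ioi 0)
  rw [← lintegral_add_compl _ measurableSet_Ioi, Set.compl_Ioi,
    setLIntegral_congr Iio_ae_eq_Iic.symm, left, right, two_mul]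

theorem lintegral_Ioi_rpow_of_lt {p : ℝ} (hp : p < -1) {c : ℝ} (hc : 0 < c) :
    ∫⁻ t in Set.Ioi c, ENNReal.ofReal t ^ p = ENNReal.ofReal (-c ^ (p + 1) / (p + 1)) := by
  have pos {t : ℝ} (ht : t ∈ Set.Ioi c) : 0 < t := hc.trans ht
  rw [← integral_Ioi_rpow_of_lt hp hc,
    ofReal_integral_eq_lintegral_ofReal (integrableOn_Ioi_rpow_of_lt hp hc)]
  · exact setLIntegral_congr_fun measurableSet_Ioi fun t ht ↦ ENNReal.ofReal_rpow_of_pos (pos ht)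
  · filter_upwards [ae_restrict_mem measurableSet_Ioi] with t ht
    exact Real.rpow_nonneg (pos ht).le p

theorem lintegral_max_abs_rpow {α : ℝ} (hα : 1 < α) {a : ℝ} (ha : 0 < a) :
    ∫⁻ t, ENNReal.ofReal (max |t| a) ^ (-α) =
      ENNReal.ofReal (2 * α / (α - 1)) * ENNReal.ofReal a ^ (1 - α) := by
  have near : ∫⁻ t in Set.Ioc 0 a, ENNReal.ofReal (max t a) ^ (-α) =
      ENNReal.ofReal (a ^ (1 - α)) := by
    calc
      _ = ∫⁻ _ in Set.Ioc 0 a, ENNReal.ofReal (a ^ (-α)) :=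
        setLIntegral_congr_fun measurableSet_Ioc fun t ht ↦ by
          simp only [max_eq_right ht.2, ENNReal.ofReal_rpow_of_pos ha]
      _ = _ := by
        rw [setLIntegral_const, Real.volume_Ioc, sub_zero, ← ENNReal.ofReal_mul (by positivity),
          ← Real.rpow_add_one ha.ne', neg_add_eq_sub]
  have far : ∫⁻ t in Set.Ioi a, ENNReal.ofReal (max t a) ^ (-α) =
      ENNReal.ofReal (a ^ (1 - α) / (α - 1)) := by
    calc
      _ = ∫⁻ t in Set.Ioi a, ENNReal.ofReal t ^ (-α) :=
        setLIntegral_congr_fun measurableSet_Ioi fun t ht ↦ by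
          simp only [max_eq_left (Set.mem_Ioi.1 ht).le]
      _ = _ := by
        rw [lintegral_Ioi_rpow_of_lt (by linarith) ha, neg_add_eq_sub, ← neg_sub α 1, div_neg,
          neg_div, neg_neg]
  have hα' : 0 < α - 1 := sub_pos.2 hα
  rw [lintegral_comp_abs fun t ↦ ENNReal.ofReal (max t a) ^ (-α), ← Set.Ioc_union_Ioi_eq_Ioi ha.le,
    lintegral_union measurableSet_Ioi (Set.Ioc_disjoint_Ioi le_rfl), near, far,
    ← ENNReal.ofReal_add (by positivity) (by positivity), ENNReal.ofReal_rpow_of_pos ha,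
    ← ENNReal.ofReal_mul (by positivity), ← ENNReal.ofReal_ofNat,
    ← ENNReal.ofReal_mul zero_le_two]
  congr 1
  field_simp
  ring

theorem lintegral_max_abs_rpow_le {α : ℝ} (hα : 1 < α) (a : ℝ) :
    ∫⁻ t, ENNReal.ofReal (max |t| a) ^ (-α) ≤
      ENNReal.ofReal (2 * α / (α - 1)) * ENNReal.ofReal a ^ (1 - α) := by
  rcases le_or_gt a 0 with ha | ha
  · have hc : 0 < 2 * α / (α - 1) := div_pos (by linarith) (sub_pos.2 hα)
    rw [ENNReal.ofReal_of_nonpos ha, ENNReal.zero_rpow_of_neg (sub_neg.2 hα),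
      ENNReal.mul_top (ENNReal.ofReal_pos.2 hc).ne']
    exact le_top
  · exact (lintegral_max_abs_rpow hα ha).le

section InnerProductSpace

variable {E : Type*} [NormedAddCommGroup E] [InnerProductSpace ℝ E]

theorem norm_smul_sub_smul_sq (r ρ : ℝ) (x y : E) :
    ‖r • x - ρ • y‖ ^ 2 = (r - ρ) * (r * ‖x‖ ^ 2 - ρ * ‖y‖ ^ 2) + r * ρ * ‖x - y‖ ^ 2 := by
  simp only [norm_sub_sq_real, norm_smul, real_inner_smul_left, real_inner_smul_right, mul_pow,
    Real.norm_eq_abs, sq_abs]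
  ring

theorem max_abs_sub_mul_norm_sub_le_norm_smul_sub_smul {θ ω : E} (hθ : ‖θ‖ = 1) (hω : ‖ω‖ = 1)
    {s r ρ : ℝ} (hs : 0 ≤ s) (hr : s ≤ r) (hρ : s ≤ ρ) :
    max |ρ - r| (s * ‖θ - ω‖) ≤ ‖r • θ - ρ • ω‖ := by
  have norm_sq : ‖r • θ - ρ • ω‖ ^ 2 = (ρ - r) ^ 2 + r * ρ * ‖θ - ω‖ ^ 2 := by
    rw [norm_smul_sub_smul_sq, hθ, hω]
    ring
  have self_mul_le : s * s ≤ r * ρ := mul_le_mul hr hρ hs (hs.trans hr)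
  have hmul : 0 ≤ r * ρ := (mul_self_nonneg s).trans self_mul_le
  refine max_le (abs_le_of_sq_le_sq ?_ (norm_nonneg _)) (le_of_sq_le_sq ?_ (norm_nonneg _))
  · rw [norm_sq]
    exact le_add_of_nonneg_right (by positivity)
  · calc
      (s * ‖θ - ω‖) ^ 2 = s * s * ‖θ - ω‖ ^ 2 := by ring
      _ ≤ r * ρ * ‖θ - ω‖ ^ 2 := by gcongr
      _ ≤ ‖r • θ - ρ • ω‖ ^ 2 := by
        rw [norm_sq]
        exact le_add_of_nonneg_left (sq_nonneg _)

theorem lintegral_Ici_norm_smul_sub_smul_rpow_le {α : ℝ} (hα : 1 < α) {θ ω : E} (hθ : ‖θ‖ = 1)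
    (hω : ‖ω‖ = 1) {s r : ℝ} (hs : 0 ≤ s) (hr : s ≤ r) :
    ∫⁻ ρ in Set.Ici s, ENNReal.ofReal ‖r • θ - ρ • ω‖ ^ (-α) ≤
      ENNReal.ofReal (2 * α / (α - 1)) * ENNReal.ofReal (s * ‖θ - ω‖) ^ (1 - α) := by
  have pointwise (ρ : ℝ) (hρ : s ≤ ρ) : ENNReal.ofReal ‖r • θ - ρ • ω‖ ^ (-α) ≤
      ENNReal.ofReal (max |ρ - r| (s * ‖θ - ω‖)) ^ (-α) := by
    simp only [ENNReal.rpow_neg, ENNReal.inv_le_inv]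
    gcongr
    exact max_abs_sub_mul_norm_sub_le_norm_smul_sub_smul hθ hω hs hr hρ
  calc
    _ ≤ ∫⁻ ρ in Set.Ici s, ENNReal.ofReal (max |ρ - r| (s * ‖θ - ω‖)) ^ (-α) :=
      setLIntegral_mono' measurableSet_Ici pointwise
    _ ≤ ∫⁻ ρ, ENNReal.ofReal (max |ρ - r| (s * ‖θ - ω‖)) ^ (-α) := setLIntegral_le_lintegral _ _
    _ = ∫⁻ t, ENNReal.ofReal (max |t| (s * ‖θ - ω‖)) ^ (-α) :=
      lintegral_sub_right_eq_self (fun t ↦ ENNReal.ofReal (max |t| (s * ‖θ - ω‖)) ^ (-α)) r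
    _ ≤ _ := lintegral_max_abs_rpow_le hα _

end InnerProductSpace

theorem stmt4_general {E : Type*} [NormedAddCommGroup E] [InnerProductSpace ℝ E]
    {α : ℝ} (hα : 1 < α) {R lam : ℝ} (hR : 0 < R) (hlam : 0 < lam) (hlam' : lam ≤ 1)
    {θ ω : E} (hθ : ‖θ‖ = 1) (hω : ‖ω‖ = 1) :
    (∫⁻ r in Set.Icc (lam * R) R, ∫⁻ ρ in Set.Icc (lam * R) R,
        ENNReal.ofReal ‖r • θ - ρ • ω‖ ^ (-α)) ≤
      ENNReal.ofReal (2 * α / (α - 1) * (1 - lam) * lam ^ (1 - α) * R) *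
        ENNReal.ofReal ‖R • θ - R • ω‖ ^ (1 - α) := by
  have hs : 0 ≤ lam * R := by positivity
  have hc : 0 ≤ 2 * α / (α - 1) := div_nonneg (by linarith) (sub_pos.2 hα).le
  have hsub : 0 ≤ 1 - lam := sub_nonneg.2 hlam'
  have scale : lam * R * ‖θ - ω‖ = lam * ‖R • θ - R • ω‖ := by
    rw [← smul_sub, norm_smul, Real.norm_of_nonneg hR.le, mul_assoc]
  calc
    _ ≤ ∫⁻ _ in Set.Icc (lam * R) R,
        ENNReal.ofReal (2 * α / (α - 1)) * ENNReal.ofReal (lam * R * ‖θ - ω‖) ^ (1 - α) :=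
      setLIntegral_mono measurable_const fun r hr ↦
        (lintegral_mono_set Set.Icc_subset_Ici_self).trans
          (lintegral_Ici_norm_smul_sub_smul_rpow_le hα hθ hω hs hr.1)
    _ = ENNReal.ofReal (2 * α / (α - 1)) *
          (ENNReal.ofReal (lam ^ (1 - α)) * ENNReal.ofReal ‖R • θ - R • ω‖ ^ (1 - α)) *
          ENNReal.ofReal ((1 - lam) * R) := by
      rw [setLIntegral_const, Real.volume_Icc, ← one_sub_mul, scale, ENNReal.ofReal_mul hlam.le,
        ENNReal.mul_rpow_of_ne_top ENNReal.ofReal_ne_top ENNReal.ofReal_ne_top,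
        ENNReal.ofReal_rpow_of_pos hlam]
    _ = _ := by
      rw [ENNReal.ofReal_mul hsub, ENNReal.ofReal_mul (by positivity),
        ENNReal.ofReal_mul (by positivity), ENNReal.ofReal_mul hc]
      ring

/-- a two-dimensional radial integral estimate, uniform in the dimension:
`∫_{λR}^{R} ∫_{λR}^{R} |rθ − ρω|^{−α} dr dρ ≤ C(α) (1−λ) λ^{1−α} R |Rθ − Rω|^{1−α}`,
with both sides interpreted in `[0,∞]`. -/
theorem stmt4 (α : ℝ) (hα : 1 < α) :
    ∃ C : ℝ, 0 < C ∧
      ∀ (n : ℕ), 1 ≤ n → ∀ (R lam : ℝ), 0 < R → 0 < lam → lam < 1 →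
      ∀ θ ω : Euc n, ‖θ‖ = 1 → ‖ω‖ = 1 →
        (∫⁻ r in Set.Icc (lam * R) R, ∫⁻ ρ in Set.Icc (lam * R) R,
            (ENNReal.ofReal ‖r • θ - ρ • ω‖) ^ (-α))
          ≤ ENNReal.ofReal (C * (1 - lam) * lam ^ (1 - α) * R) *
              (ENNReal.ofReal ‖R • θ - R • ω‖) ^ (1 - α) :=
  ⟨2 * α / (α - 1), div_pos (by linarith) (sub_pos.2 hα),
    fun _ _ _ _ hR hlam hlam' _ _ hθ hω ↦ stmt4_general hα hR hlam hlam'.le hθ hω⟩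
end
end
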